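/- arXiv:2003.05577 — 2 statements merged into one kernel-verified Lean document; each statement's English description precedes it below -/
import Mathlib

section
/- Let F be a field, q a nonzero element of F, d ≥ 1 an odd integer, and k0,k1,k2,k3 nonzero elements of F with k0^2 = q^{-d-1}. Then the operators T0,T1,T2,T3 defined in the context satisfy (Ti - ki)(Ti - ki^{-1}) = 0 for i = 0,1,2,3 and T0 T1 T2 T3 = q^{-1}·id. In particular each Ti is invertible, Ti + Ti^{-1} equals the scalar ki + ki^{-1}, and (T0,T1,T2,T3) is a (d+1)-dimensional representation of the universal DAHA H_q of type (C1^∨,C1), denoted E(k0,k1,k2,k3), on which ti + ti^{-1} acts as the scalar ki + ki^{-1} for i = 0,1,2,3. -/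
/-!
Set `v_i = 0` for `i > d`. Then the exceptional formulas at `v_0` and `v_d` become instances of the
generic ones: the coefficient of `v_{-1}` carries the factor `1 - q ^ 0 = 0`, the coefficient of
`v_d` in the formulas for `v_{d+1}` carries the factor `1 - k0 ^ 2 * q ^ (d + 1) = 0`, and
`T 0 v_d = k0 v_d` agrees with the generic odd formula because `k0⁻¹ * q ^ (-d-1) = k0`.
So the `v_i` form an infinite sequence obeying a single set of formulas (`Chain`), and the relations
can be checked on it without boundary cases.

Each quadratic relation is a computation in a pair of neighbouring vectors, or reduces to the
eigenvectors adjacent to `v_i`. For the product, `T 1 * T 2 * T 3` sends an even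
`v_i` to a multiple of `v_i - B v_{i-1}`, where `B = (1 - q ^ i) * (1 - k0 ^ 2 * q ^ i)`, and `T 0`
sends this back to a multiple of `v_i`. For odd `i`, put `c = k0 * k1 * k3 * q ^ i` and
`A = (c - k2) * (c - k2⁻¹)`; then `T 3 v_i = k3⁻¹ (v_i - A v_{i-1}) + k3 v_{i+1}`, where
`T 2 (v_i - A v_{i-1}) = c v_i` and the term in `v_{i+1}` is handled by the even case.
Everything else in the theorem follows from `T * T = (k + k⁻¹) • T - 1`, which
exhibits `(k + k⁻¹) • 1 - T` as the inverse of `T`.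
-/

universe u

namespace DAHA

variable {F : Type*} [Field F]

/-- A representation of the universal DAHA `H_q` of type `(C₁∨, C₁)` on `V`:
a quadruple of invertible operators (indexed by `ZMod 4`) such that each
`Tᵢ + Tᵢ⁻¹` commutes with every `Tⱼ` and `T₀ T₁ T₂ T₃ = q⁻¹ • id`. -/
def IsRep {V : Type*} [AddCommGroup V] [Module F V] (q : F)
    (T : ZMod 4 → Module.End F V) : Prop :=
  (∀ i, IsUnit (T i)) ∧
  (∀ i j, Commute (T i + Ring.inverse (T i)) (T j)) ∧
  (T 0 * T 1 * T 2 * T 3 = q⁻¹ • (1 : Module.End F V))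

/-- Irreducibility: `V ≠ 0` and the only invariant subspaces are `⊥` and `⊤`. -/
def Irred {V : Type*} [AddCommGroup V] [Module F V]
    (T : ZMod 4 → Module.End F V) : Prop :=
  (∃ v : V, v ≠ 0) ∧
  ∀ W : Submodule F V, (∀ i, ∀ w ∈ W, T i w ∈ W) → W = ⊥ ∨ W = ⊤

/-- Isomorphism of two operator quadruples. -/
def Iso {V : Type*} {V' : Type*} [AddCommGroup V] [Module F V]
    [AddCommGroup V'] [Module F V']
    (T : ZMod 4 → Module.End F V) (T' : ZMod 4 → Module.End F V') : Prop :=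
  ∃ S : V ≃ₗ[F] V', ∀ i v, S (T i v) = T' i (S v)

/-- The twist of an operator quadruple by `ε ∈ ℤ/4ℤ`. -/
def twist {V : Type*} [AddCommGroup V] [Module F V]
    (T : ZMod 4 → Module.End F V) (ε : ZMod 4) : ZMod 4 → Module.End F V :=
  fun i => T (i + ε)

/-- The standard basis vectors `v_i` of `Fin (d+1) → F`, extended by `0` beyond index `d`. -/
noncomputable def e (F : Type*) [Field F] (d i : ℕ) : Fin (d + 1) → F :=
  if h : i < d + 1 then Pi.single (⟨i, h⟩ : Fin (d + 1)) (1 : F) else 0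

/-- The basis vectors `m_i` of `ℕ →₀ F`. -/
noncomputable def mv (F : Type*) [Field F] (i : ℕ) : ℕ →₀ F := Finsupp.single i 1

/-- The defining action of the even-dimensional module `E(k₀,k₁,k₂,k₃)` (for `d` odd)
on the basis `v_0, …, v_d` of `Fin (d+1) → F`. -/
def IsE (q k0 k1 k2 k3 : F) (d : ℕ)
    (T : ZMod 4 → Module.End F (Fin (d + 1) → F)) : Prop :=
  (∀ i : ℕ, Even i → 2 ≤ i → i ≤ d - 1 →
    T 0 (e F d i) = (k0⁻¹ * (q ^ i)⁻¹ * (1 - q ^ i) * (1 - k0 ^ 2 * q ^ i)) • e F d (i - 1)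
      + (k0 + k0⁻¹ - k0⁻¹ * (q ^ i)⁻¹) • e F d i) ∧
  (∀ i : ℕ, Odd i → i ≤ d - 2 →
    T 0 (e F d i) = (k0⁻¹ * (q ^ (i + 1))⁻¹) • (e F d i - e F d (i + 1))) ∧
  (T 0 (e F d 0) = k0 • e F d 0) ∧
  (T 0 (e F d d) = k0 • e F d d) ∧
  (∀ i : ℕ, Even i → 2 ≤ i → i ≤ d - 1 →
    T 1 (e F d i) = (-(k1 * (1 - q ^ i) * (1 - k0 ^ 2 * q ^ i))) • e F d (i - 1)
      + k1 • e F d i + k1⁻¹ • e F d (i + 1)) ∧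
  (∀ i : ℕ, Odd i → i ≤ d → T 1 (e F d i) = k1⁻¹ • e F d i) ∧
  (T 1 (e F d 0) = k1 • e F d 0 + k1⁻¹ • e F d 1) ∧
  (∀ i : ℕ, Even i → i ≤ d - 1 →
    T 2 (e F d i) = (k0⁻¹ * k1⁻¹ * k3⁻¹ * (q ^ (i + 1))⁻¹) • (e F d i - e F d (i + 1))) ∧
  (∀ i : ℕ, Odd i → i ≤ d →
    T 2 (e F d i) = ((k0 * k1 * k3 * q ^ i)⁻¹ * (k0 * k1 * k3 * q ^ i - k2)
        * (k0 * k1 * k3 * q ^ i - k2⁻¹)) • e F d (i - 1)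
      + (k2 + k2⁻¹ - k0⁻¹ * k1⁻¹ * k3⁻¹ * (q ^ i)⁻¹) • e F d i) ∧
  (∀ i : ℕ, Even i → i ≤ d - 1 → T 3 (e F d i) = k3 • e F d i) ∧
  (∀ i : ℕ, Odd i → i ≤ d - 2 →
    T 3 (e F d i) = (-(k3⁻¹ * (k0 * k1 * k3 * q ^ i - k2)
        * (k0 * k1 * k3 * q ^ i - k2⁻¹))) • e F d (i - 1)
      + k3⁻¹ • e F d i + k3 • e F d (i + 1)) ∧
  (T 3 (e F d d) = (-(k3⁻¹ * (k0 * k1 * k3 * q ^ d - k2)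
        * (k0 * k1 * k3 * q ^ d - k2⁻¹))) • e F d (d - 1)
      + k3⁻¹ • e F d d)

/-- The defining action of the odd-dimensional module `O(k₀,k₁,k₂,k₃)` (for `d` even)
on the basis `v_0, …, v_d` of `Fin (d+1) → F`. -/
def IsO (q k0 k1 k2 k3 : F) (d : ℕ)
    (T : ZMod 4 → Module.End F (Fin (d + 1) → F)) : Prop :=
  (∀ i : ℕ, Even i → 2 ≤ i → i ≤ d →
    T 0 (e F d i) = (k0⁻¹ * (q ^ i)⁻¹ * (1 - q ^ i) * (1 - k0 ^ 2 * q ^ i)) • e F d (i - 1)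
      + (k0 + k0⁻¹ - k0⁻¹ * (q ^ i)⁻¹) • e F d i) ∧
  (∀ i : ℕ, Odd i → i ≤ d - 1 →
    T 0 (e F d i) = (k0⁻¹ * (q ^ (i + 1))⁻¹) • (e F d i - e F d (i + 1))) ∧
  (T 0 (e F d 0) = k0 • e F d 0) ∧
  (∀ i : ℕ, Even i → 2 ≤ i → i ≤ d - 2 →
    T 1 (e F d i) = (-(k1 * (1 - q ^ i) * (1 - k0 ^ 2 * q ^ i))) • e F d (i - 1)
      + k1 • e F d i + k1⁻¹ • e F d (i + 1)) ∧
  (∀ i : ℕ, Odd i → i ≤ d - 1 → T 1 (e F d i) = k1⁻¹ • e F d i) ∧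
  (T 1 (e F d 0) = k1 • e F d 0 + k1⁻¹ • e F d 1) ∧
  (T 1 (e F d d) = (-(k1 * (1 - q ^ d) * (1 - k0 ^ 2 * q ^ d))) • e F d (d - 1) + k1 • e F d d) ∧
  (∀ i : ℕ, Even i → i ≤ d - 2 →
    T 2 (e F d i) = (k2 * q ^ (d - i)) • (e F d i - e F d (i + 1))) ∧
  (∀ i : ℕ, Odd i → i ≤ d - 1 →
    T 2 (e F d i) = (-(k2 * (1 - (k2 ^ 2)⁻¹ * (q ^ (d + 1 - i))⁻¹) * (1 - q ^ (d - i + 1)))) • e F d (i - 1)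
      + (k2 + k2⁻¹ - k2 * q ^ (d - i + 1)) • e F d i) ∧
  (T 2 (e F d d) = k2 • e F d d) ∧
  (∀ i : ℕ, Even i → i ≤ d → T 3 (e F d i) = k3 • e F d i) ∧
  (∀ i : ℕ, Odd i → i ≤ d - 1 →
    T 3 (e F d i) = (-(k3⁻¹ * (1 - (k2 ^ 2)⁻¹ * (q ^ (d + 1 - i))⁻¹)
        * (1 - (q ^ (d + 1 - i))⁻¹))) • e F d (i - 1)
      + k3⁻¹ • e F d i + k3 • e F d (i + 1))

/-- The defining action of the infinite-dimensional module `M(k₀,k₁,k₂,k₃)`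
on the basis `m_0, m_1, …` of `ℕ →₀ F`. -/
def IsM (q k0 k1 k2 k3 : F) (T : ZMod 4 → Module.End F (ℕ →₀ F)) : Prop :=
  (∀ i : ℕ, Even i → 2 ≤ i →
    T 0 (mv F i) = (k0⁻¹ * (q ^ i)⁻¹ * (1 - q ^ i) * (1 - k0 ^ 2 * q ^ i)) • mv F (i - 1)
      + (k0 + k0⁻¹ - k0⁻¹ * (q ^ i)⁻¹) • mv F i) ∧
  (∀ i : ℕ, Odd i →
    T 0 (mv F i) = (k0⁻¹ * (q ^ (i + 1))⁻¹) • (mv F i - mv F (i + 1))) ∧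
  (T 0 (mv F 0) = k0 • mv F 0) ∧
  (∀ i : ℕ, Even i → 2 ≤ i →
    T 1 (mv F i) = (-(k1 * (1 - q ^ i) * (1 - k0 ^ 2 * q ^ i))) • mv F (i - 1)
      + k1 • mv F i + k1⁻¹ • mv F (i + 1)) ∧
  (∀ i : ℕ, Odd i → T 1 (mv F i) = k1⁻¹ • mv F i) ∧
  (T 1 (mv F 0) = k1 • mv F 0 + k1⁻¹ • mv F 1) ∧
  (∀ i : ℕ, Even i →
    T 2 (mv F i) = (k0⁻¹ * k1⁻¹ * k3⁻¹ * (q ^ (i + 1))⁻¹) • (mv F i - mv F (i + 1))) ∧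
  (∀ i : ℕ, Odd i →
    T 2 (mv F i) = ((k0 * k1 * k3 * q ^ i)⁻¹ * (k0 * k1 * k3 * q ^ i - k2)
        * (k0 * k1 * k3 * q ^ i - k2⁻¹)) • mv F (i - 1)
      + (k2 + k2⁻¹ - k0⁻¹ * k1⁻¹ * k3⁻¹ * (q ^ i)⁻¹) • mv F i) ∧
  (∀ i : ℕ, Even i → T 3 (mv F i) = k3 • mv F i) ∧
  (∀ i : ℕ, Odd i →
    T 3 (mv F i) = (-(k3⁻¹ * (k0 * k1 * k3 * q ^ i - k2)
        * (k0 * k1 * k3 * q ^ i - k2⁻¹))) • mv F (i - 1)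
      + k3⁻¹ • mv F i + k3 • mv F (i + 1))


/-! ### Extending the basis by zero -/

/-- A sequence `f` on which `T` acts by the generic formulas of `E(k₀,k₁,k₂,k₃)`, for all
indices. The even indices are split into `0` and `2 * m + 2`, so that `f (i - 1)` is never needed
at `i = 0`. -/
structure Chain {V : Type*} [AddCommGroup V] [Module F V] (q k0 k1 k2 k3 : F) (f : ℕ → V)
    (T : ZMod 4 → Module.End F V) : Prop where
  zero0 : T 0 (f 0) = k0 • f 0
  zero_odd : ∀ m, T 0 (f (2 * m + 1)) =
    (k0⁻¹ * (q ^ (2 * m + 2))⁻¹) • (f (2 * m + 1) - f (2 * m + 2))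
  zero_even : ∀ m, T 0 (f (2 * m + 2)) =
    (k0⁻¹ * (q ^ (2 * m + 2))⁻¹ * (1 - q ^ (2 * m + 2)) * (1 - k0 ^ 2 * q ^ (2 * m + 2))) •
      f (2 * m + 1) + (k0 + k0⁻¹ - k0⁻¹ * (q ^ (2 * m + 2))⁻¹) • f (2 * m + 2)
  one0 : T 1 (f 0) = k1 • f 0 + k1⁻¹ • f 1
  one_odd : ∀ m, T 1 (f (2 * m + 1)) = k1⁻¹ • f (2 * m + 1)
  one_even : ∀ m, T 1 (f (2 * m + 2)) =
    (-(k1 * (1 - q ^ (2 * m + 2)) * (1 - k0 ^ 2 * q ^ (2 * m + 2)))) • f (2 * m + 1)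
      + k1 • f (2 * m + 2) + k1⁻¹ • f (2 * m + 3)
  two_odd : ∀ m, T 2 (f (2 * m + 1)) =
    ((k0 * k1 * k3 * q ^ (2 * m + 1))⁻¹ * (k0 * k1 * k3 * q ^ (2 * m + 1) - k2)
        * (k0 * k1 * k3 * q ^ (2 * m + 1) - k2⁻¹)) • f (2 * m)
      + (k2 + k2⁻¹ - k0⁻¹ * k1⁻¹ * k3⁻¹ * (q ^ (2 * m + 1))⁻¹) • f (2 * m + 1)
  two_even : ∀ m, T 2 (f (2 * m)) =
    (k0⁻¹ * k1⁻¹ * k3⁻¹ * (q ^ (2 * m + 1))⁻¹) • (f (2 * m) - f (2 * m + 1))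
  three_odd : ∀ m, T 3 (f (2 * m + 1)) =
    (-(k3⁻¹ * (k0 * k1 * k3 * q ^ (2 * m + 1) - k2)
        * (k0 * k1 * k3 * q ^ (2 * m + 1) - k2⁻¹))) • f (2 * m)
      + k3⁻¹ • f (2 * m + 1) + k3 • f (2 * m + 2)
  three_even : ∀ m, T 3 (f (2 * m)) = k3 • f (2 * m)

lemma e_eq_zero {d i : ℕ} (h : d < i) : e F d i = 0 := by
  simp [e, show ¬ i < d + 1 by omega]

/-- Extending the basis by zero absorbs the boundary formulas into the generic ones. -/
lemma IsE.chain {q k0 k1 k2 k3 : F} {d : ℕ} (hq : q ≠ 0) (hodd : Odd d) (hk0 : k0 ≠ 0)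
    (hpar : k0 ^ 2 = (q ^ (d + 1))⁻¹)
    {T : ZMod 4 → Module.End F (Fin (d + 1) → F)} (hT : IsE q k0 k1 k2 k3 d T) :
    Chain q k0 k1 k2 k3 (e F d) T := by
  obtain ⟨a2, a1, a0, ad, b2, b1, b0, c0, c1, d0, d1, dd⟩ := hT
  obtain ⟨n, rfl⟩ := hodd
  have ev : ∀ m, Even (2 * m) := fun m => even_two_mul m
  have ev2 : ∀ m, Even (2 * m + 2) := fun m => ⟨m + 1, by ring⟩
  have od : ∀ m, Odd (2 * m + 1) := fun m => ⟨m, rfl⟩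
  have hvan : 1 - k0 ^ 2 * q ^ (2 * n + 2) = 0 := by
    rw [hpar, inv_mul_cancel₀ (pow_ne_zero _ hq), sub_self]
  have hk : k0⁻¹ * (q ^ (2 * n + 2))⁻¹ = k0 := by
    rw [← hpar]; field_simp
  refine ⟨a0, fun m => ?_, fun m => ?_, b0, fun m => ?_, fun m => ?_, fun m => ?_, fun m => ?_,
    fun m => ?_, fun m => ?_⟩
  · rcases lt_trichotomy m n with h | rfl | h
    · exact a1 _ (od m) (by omega)
    · rw [ad, hk, e_eq_zero (i := 2 * m + 2) (by omega), sub_zero]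
    · simp [e_eq_zero (F := F) (show 2 * n + 1 < 2 * m + 1 by omega),
        e_eq_zero (F := F) (show 2 * n + 1 < 2 * m + 2 by omega)]
  · rcases lt_trichotomy m n with h | rfl | h
    · exact a2 _ (ev2 m) (by omega) (by omega)
    · simp [hvan, e_eq_zero (F := F) (show 2 * m + 1 < 2 * m + 2 by omega)]
    · simp [e_eq_zero (F := F) (show 2 * n + 1 < 2 * m + 1 by omega),
        e_eq_zero (F := F) (show 2 * n + 1 < 2 * m + 2 by omega)]
  · rcases le_or_gt m n with h | h
    · exact b1 _ (od m) (by omega)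
    · simp [e_eq_zero (F := F) (show 2 * n + 1 < 2 * m + 1 by omega)]
  · rcases lt_trichotomy m n with h | rfl | h
    · exact b2 _ (ev2 m) (by omega) (by omega)
    · simp [hvan, e_eq_zero (F := F) (show 2 * m + 1 < 2 * m + 2 by omega),
        e_eq_zero (F := F) (show 2 * m + 1 < 2 * m + 3 by omega)]
    · simp [e_eq_zero (F := F) (show 2 * n + 1 < 2 * m + 1 by omega),
        e_eq_zero (F := F) (show 2 * n + 1 < 2 * m + 2 by omega),
        e_eq_zero (F := F) (show 2 * n + 1 < 2 * m + 3 by omega)]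
  · rcases le_or_gt m n with h | h
    · exact c1 _ (od m) (by omega)
    · simp [e_eq_zero (F := F) (show 2 * n + 1 < 2 * m + 1 by omega),
        e_eq_zero (F := F) (show 2 * n + 1 < 2 * m by omega)]
  · rcases le_or_gt m n with h | h
    · exact c0 _ (ev m) (by omega)
    · simp [e_eq_zero (F := F) (show 2 * n + 1 < 2 * m + 1 by omega),
        e_eq_zero (F := F) (show 2 * n + 1 < 2 * m by omega)]
  · rcases lt_trichotomy m n with h | rfl | h
    · exact d1 _ (od m) (by omega)
    · rw [dd, e_eq_zero (i := 2 * m + 2) (by omega), smul_zero, add_zero]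
      rfl
    · simp [e_eq_zero (F := F) (show 2 * n + 1 < 2 * m + 1 by omega),
        e_eq_zero (F := F) (show 2 * n + 1 < 2 * m + 2 by omega),
        e_eq_zero (F := F) (show 2 * n + 1 < 2 * m by omega)]
  · rcases le_or_gt m n with h | h
    · exact d0 _ (ev m) (by omega)
    · simp [e_eq_zero (F := F) (show 2 * n + 1 < 2 * m by omega)]

/-! ### Relations on the basis vectors -/

lemma forall_nat_of_parity {P : ℕ → Prop} (h0 : P 0) (h1 : ∀ m, P (2 * m + 1))
    (h2 : ∀ m, P (2 * m + 2)) (i : ℕ) : P i := by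
  obtain ⟨m, rfl | rfl⟩ := Nat.even_or_odd' i
  · cases m with
    | zero => exact h0
    | succ m => exact h2 m
  · exact h1 m

namespace Chain

variable {V : Type*} [AddCommGroup V] [Module F V] {q k0 k1 k2 k3 : F} {f : ℕ → V}
    {T : ZMod 4 → Module.End F V}

lemma quad_zero (h : Chain q k0 k1 k2 k3 f T) (hq : q ≠ 0) (hk0 : k0 ≠ 0) (i : ℕ) :
    T 0 (T 0 (f i)) = (k0 + k0⁻¹) • T 0 (f i) - f i := by
  revert i
  refine forall_nat_of_parity ?_ (fun m => ?_) (fun m => ?_)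
  · simp only [h.zero0, map_smul]
    match_scalars
    field_simp
    ring
  · simp only [h.zero_odd, h.zero_even, map_smul, map_sub]
    match_scalars <;> field_simp <;> ring
  · simp only [h.zero_odd, h.zero_even, map_smul, map_add]
    match_scalars <;> field_simp <;> ring

lemma quad_one (h : Chain q k0 k1 k2 k3 f T) (hk1 : k1 ≠ 0) (i : ℕ) :
    T 1 (T 1 (f i)) = (k1 + k1⁻¹) • T 1 (f i) - f i := by
  revert i
  refine forall_nat_of_parity ?_ (fun m => ?_) (fun m => ?_)
  · have h1 : T 1 (f 1) = k1⁻¹ • f 1 := h.one_odd 0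
    simp only [h.one0, h1, map_smul, map_add]
    match_scalars <;> field_simp <;> ring
  · simp only [h.one_odd, map_smul]
    match_scalars
    field_simp
    ring
  · have h3 : T 1 (f (2 * m + 3)) = k1⁻¹ • f (2 * m + 3) := h.one_odd (m + 1)
    simp only [h.one_odd, h.one_even, h3, map_smul, map_add]
    match_scalars <;> field_simp <;> ring

lemma quad_two (h : Chain q k0 k1 k2 k3 f T) (hq : q ≠ 0) (hk0 : k0 ≠ 0) (hk1 : k1 ≠ 0)
    (hk2 : k2 ≠ 0) (hk3 : k3 ≠ 0) (i : ℕ) :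
    T 2 (T 2 (f i)) = (k2 + k2⁻¹) • T 2 (f i) - f i := by
  obtain ⟨m, rfl | rfl⟩ := Nat.even_or_odd' i
  · simp only [h.two_odd, h.two_even, map_smul, map_sub]
    match_scalars <;> field_simp <;> ring
  · simp only [h.two_odd, h.two_even, map_smul, map_add]
    match_scalars <;> field_simp <;> ring

lemma quad_three (h : Chain q k0 k1 k2 k3 f T) (hk3 : k3 ≠ 0) (i : ℕ) :
    T 3 (T 3 (f i)) = (k3 + k3⁻¹) • T 3 (f i) - f i := by
  obtain ⟨m, rfl | rfl⟩ := Nat.even_or_odd' i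
  · simp only [h.three_even, map_smul]
    match_scalars
    field_simp
    ring
  · have h2 : T 3 (f (2 * m + 2)) = k3 • f (2 * m + 2) := h.three_even (m + 1)
    simp only [h.three_odd, h.three_even, h2, map_smul, map_add]
    generalize (k0 * k1 * k3 * q ^ (2 * m + 1) - k2) * (k0 * k1 * k3 * q ^ (2 * m + 1) - k2⁻¹) = A
    match_scalars <;> field_simp <;> ring

/-- The product relation on even vectors, with the scalar action of `T 3` removed; in this form it
also accounts for the last term of `T 3` on odd vectors. -/
lemma prod_even (h : Chain q k0 k1 k2 k3 f T) (hq : q ≠ 0) (hk0 : k0 ≠ 0) (hk1 : k1 ≠ 0)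
    (hk3 : k3 ≠ 0) (m : ℕ) :
    T 0 (T 1 (T 2 (f (2 * m)))) = (q⁻¹ * k3⁻¹) • f (2 * m) := by
  cases m with
  | zero =>
    have h1 : T 1 (f 1) = k1⁻¹ • f 1 := h.one_odd 0
    have h2 := h.two_even 0
    simp only [mul_zero, zero_add] at h2 ⊢
    have h12 : T 1 (f 0 - f 1) = k1 • f 0 := by
      rw [map_sub, h.one0, h1]
      module
    simp only [h2, map_smul, h12, h.zero0]
    match_scalars
    field_simp
  | succ m =>
    have h3 : T 1 (f (2 * m + 3)) = k1⁻¹ • f (2 * m + 3) := h.one_odd (m + 1)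
    have h2 : T 2 (f (2 * m + 2)) = (k0⁻¹ * k1⁻¹ * k3⁻¹ * (q ^ (2 * m + 3))⁻¹) •
      (f (2 * m + 2) - f (2 * m + 3)) := h.two_even (m + 1)
    have h12 : T 1 (f (2 * m + 2) - f (2 * m + 3)) = k1 • f (2 * m + 2) -
        (k1 * (1 - q ^ (2 * m + 2)) * (1 - k0 ^ 2 * q ^ (2 * m + 2))) • f (2 * m + 1) := by
      rw [map_sub, h.one_even, h3]
      module
    rw [show 2 * (m + 1) = 2 * m + 2 by ring]
    simp only [h2, map_smul, h12, map_sub, h.zero_even, h.zero_odd]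
    match_scalars <;> field_simp <;> ring

lemma prod (h : Chain q k0 k1 k2 k3 f T) (hq : q ≠ 0) (hk0 : k0 ≠ 0) (hk1 : k1 ≠ 0)
    (hk2 : k2 ≠ 0) (hk3 : k3 ≠ 0) (i : ℕ) :
    T 0 (T 1 (T 2 (T 3 (f i)))) = q⁻¹ • f i := by
  obtain ⟨m, rfl | rfl⟩ := Nat.even_or_odd' i
  · simp only [h.three_even, map_smul, h.prod_even hq hk0 hk1 hk3]
    match_scalars
    field_simp
  · have he : T 0 (T 1 (T 2 (f (2 * m + 2)))) = (q⁻¹ * k3⁻¹) • f (2 * m + 2) :=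
      h.prod_even hq hk0 hk1 hk3 (m + 1)
    -- `T 2 (v_i - A v_{i-1})` is a multiple of `v_i`; the factor `k3⁻¹` of `T 3` is included.
    have h23 : T 2 ((-(k3⁻¹ * (k0 * k1 * k3 * q ^ (2 * m + 1) - k2)
        * (k0 * k1 * k3 * q ^ (2 * m + 1) - k2⁻¹))) • f (2 * m) + k3⁻¹ • f (2 * m + 1)) =
        (k0 * k1 * q ^ (2 * m + 1)) • f (2 * m + 1) := by
      simp only [map_add, map_smul, h.two_even, h.two_odd]
      match_scalars <;> field_simp <;> ring
    rw [h.three_odd, map_add (T 2), h23]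
    simp only [map_add, map_smul, he, h.one_odd, h.zero_odd]
    match_scalars <;> field_simp <;> ring

end Chain

/-! ### From basis vectors to operators -/

lemma end_ext {d : ℕ} {A B : Module.End F (Fin (d + 1) → F)}
    (h : ∀ i, A (e F d i) = B (e F d i)) : A = B := by
  refine (Pi.basisFun F (Fin (d + 1))).ext fun i => ?_
  simpa [e, Nat.lt_succ_iff.mp i.isLt] using h i

/-- An operator annihilated by `(X - k) (X - k⁻¹)` is invertible, with inverse
`(k + k⁻¹) • 1 - T`. -/
lemma quad_consequences {V : Type*} [AddCommGroup V] [Module F V] {A : Module.End F V} {k : F}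
    (hk : k ≠ 0) (h : A * A = (k + k⁻¹) • A - 1) :
    (A - k • 1) * (A - k⁻¹ • 1) = 0 ∧ IsUnit A ∧ A + Ring.inverse A = (k + k⁻¹) • 1 := by
  have h1 : A * ((k + k⁻¹) • 1 - A) = 1 := by
    rw [mul_sub, h, mul_smul_comm, mul_one]
    abel
  have h2 : ((k + k⁻¹) • 1 - A) * A = 1 := by
    rw [sub_mul, h, smul_mul_assoc, one_mul]
    abel
  refine ⟨?_, ⟨⟨A, _, h1, h2⟩, rfl⟩, ?_⟩
  · simp only [sub_mul, mul_sub, h, mul_smul_comm, smul_mul_assoc, mul_one, one_mul]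
    match_scalars <;> field_simp <;> ring
  · rw [show Ring.inverse A = (k + k⁻¹) • 1 - A from
      Ring.inverse_unit (⟨A, _, h1, h2⟩ : (Module.End F V)ˣ)]
    abel

/-- the operators of `E(k₀,k₁,k₂,k₃)` satisfy the quadratic relations,
the product relation, are invertible, `Tᵢ + Tᵢ⁻¹` is the scalar `kᵢ + kᵢ⁻¹`, and they
form a representation of the universal DAHA `H_q`. -/
theorem statement0 (q : F) (hq : q ≠ 0) (d : ℕ) (hd : 1 ≤ d) (hodd : Odd d)
    (k0 k1 k2 k3 : F) (hk0 : k0 ≠ 0) (hk1 : k1 ≠ 0) (hk2 : k2 ≠ 0) (hk3 : k3 ≠ 0)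
    (hpar : k0 ^ 2 = (q ^ (d + 1))⁻¹)
    (T : ZMod 4 → Module.End F (Fin (d + 1) → F)) (hT : IsE q k0 k1 k2 k3 d T) :
    ((T 0 - k0 • 1) * (T 0 - k0⁻¹ • 1) = 0) ∧
    ((T 1 - k1 • 1) * (T 1 - k1⁻¹ • 1) = 0) ∧
    ((T 2 - k2 • 1) * (T 2 - k2⁻¹ • 1) = 0) ∧
    ((T 3 - k3 • 1) * (T 3 - k3⁻¹ • 1) = 0) ∧
    (T 0 * T 1 * T 2 * T 3 = q⁻¹ • (1 : Module.End F (Fin (d + 1) → F))) ∧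
    (∀ i, IsUnit (T i)) ∧
    (T 0 + Ring.inverse (T 0) = (k0 + k0⁻¹) • 1) ∧
    (T 1 + Ring.inverse (T 1) = (k1 + k1⁻¹) • 1) ∧
    (T 2 + Ring.inverse (T 2) = (k2 + k2⁻¹) • 1) ∧
    (T 3 + Ring.inverse (T 3) = (k3 + k3⁻¹) • 1) ∧
    Module.finrank F (Fin (d + 1) → F) = d + 1 ∧
    IsRep q T := by
  have hc := hT.chain hq hodd hk0 hpar
  obtain ⟨p0, u0, s0⟩ := quad_consequences (A := T 0) hk0
    (end_ext fun i => by simpa using hc.quad_zero hq hk0 i)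
  obtain ⟨p1, u1, s1⟩ := quad_consequences (A := T 1) hk1
    (end_ext fun i => by simpa using hc.quad_one hk1 i)
  obtain ⟨p2, u2, s2⟩ := quad_consequences (A := T 2) hk2
    (end_ext fun i => by simpa using hc.quad_two hq hk0 hk1 hk2 hk3 i)
  obtain ⟨p3, u3, s3⟩ := quad_consequences (A := T 3) hk3
    (end_ext fun i => by simpa using hc.quad_three hk3 i)
  have hp : T 0 * T 1 * T 2 * T 3 = q⁻¹ • (1 : Module.End F (Fin (d + 1) → F)) :=
    end_ext fun i => by simpa using hc.prod hq hk0 hk1 hk2 hk3 i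
  have cases4 : ∀ {P : ZMod 4 → Prop}, P 0 → P 1 → P 2 → P 3 → ∀ i, P i := by
    intro P h0 h1 h2 h3 i
    fin_cases i
    exacts [h0, h1, h2, h3]
  have hu : ∀ i, IsUnit (T i) := cases4 u0 u1 u2 u3
  have hs : ∀ i, ∃ c : F, T i + Ring.inverse (T i) = c • 1 :=
    cases4 ⟨_, s0⟩ ⟨_, s1⟩ ⟨_, s2⟩ ⟨_, s3⟩
  refine ⟨p0, p1, p2, p3, hp, hu, s0, s1, s2, s3, by simp, hu, fun i j => ?_, hp⟩
  obtain ⟨c, hc⟩ := hs i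
  rw [hc]
  exact (Commute.one_left (T j)).smul_left c

end DAHA
end

section
/- Assume F is algebraically closed and q is not a root of unity, and let d ≥ 1 be an odd integer. Let EP_d be the set of quadruples (k0,k1,k2,k3) of nonzero elements of F satisfying k0^2 = q^{-d-1} and k0k1k2k3 ≠ q^{-i}, k0k1^{-1}k2k3 ≠ q^{-i}, k0k1k2^{-1}k3 ≠ q^{-i}, k0k1k2k3^{-1} ≠ q^{-i} for all odd i with 1 ≤ i ≤ d. Then: (1) for every ε ∈ Z/4Z and every (k0,k1,k2,k3) ∈ EP_d, the twisted representation E(k0,k1,k2,k3)^ε is an irreducible (d+1)-dimensional representation of H_q; (2) every irreducible (d+1)-dimensional representation of H_q is isomorphic to E(k0,k1,k2,k3)^ε for some ε ∈ Z/4Z and some (k0,k1,k2,k3) ∈ EP_d; (3) for (k0,k1,k2,k3), (k0',k1',k2',k3') ∈ EP_d and ε, ε' ∈ Z/4Z, the representations E(k0,k1,k2,k3)^ε and E(k0',k1',k2',k3')^{ε'} are isomorphic if and only if ε = ε', k0' = k0, and ki' ∈ {ki, ki^{-1}} for i = 1,2,3. -/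
/-!
The idea is to realise every irreducible representation of dimension `d + 1` as a quotient of the
infinite-dimensional module `M(k₀,k₁,k₂,k₃)`, and to let determinants decide which twist and which
parameters occur.

By Schur's lemma (`Irred.scalar`) each `Tᵢ + Tᵢ⁻¹` is a scalar `cᵢ = kᵢ + kᵢ⁻¹` on an irreducible
finite-dimensional representation, so all the work takes place under the relations `Good q c T`. A
common eigenvector of `T₀` and `T₃` with eigenvalues `k₀`, `k₃` generates a sequence `v₀, v₁, …`
satisfying the relations of `M(k₀,k₁,k₂,k₃)`, encoded as `MRel` (`Good.exists_mrel`); conversely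
these relations on a spanning sequence imply `Good` (`MRel.good`). If `v₀` generates a space of
dimension `n`, then `v₀, …, v_{n-1}` is a basis (`MRel.exists_basis`), and the coordinate along
`v_{n-1}` is a left eigenvector of some of the `Tᵢ`. Comparing with the quadratic relations gives:

* for `n` odd, `k₀ k₁^{±1} k₂^{±1} k₃ = q⁻ⁿ` for some signs (`MRel.odd_dim`);
* for `n` even, `det T₁ = det T₂ = 1` (`Good.det_eq_one`), and if moreover `det T₃ = 1` then
  `k₀² = q⁻ⁿ` (`MRel.even_dim`).

*Irreducibility* (`IsE.irred`). A quotient of `E(k₀,k₁,k₂,k₃)` by a proper invariant subspace is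
generated by the image of `v₀`. By the constraints above its dimension is either `d + 1`, or odd and
excluded by the inequalities defining `EP_d`. The determinant hypothesis in the even case holds
because `v_d` also generates (`IsE.gen_last`) and is a common eigenvector of `T₀` and `T₁`.

*Exhaustion.* If neither `T₀, T₃` nor `T₁, T₂` had a common eigenvector, the set of eigenvalues of
`T₃ T₀` would be stable under `θ ↦ q² θ`, which is impossible as it is finite and `q` is not a root
of unity (`Good.exists_hw`). Applying this to the representation and to its twist by `1`, one finds
a twist with a common eigenvector of `T₀`, `T₃` and `det T₃ = 1` (`Good.exists_twist`). There the
sequence stops at `v_{d+1} = 0` (`MRel.vanish`) and the lowering coefficients do not vanish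
(`MRel.lowering_ne`), so that the twist is `E(k₀,k₁,k₂,k₃)` with parameters in `EP_d`
(`Good.exists_isE`).

*Isomorphisms.* On `E(k₀,k₁,k₂,k₃)` the determinant of `T₀` is `q^(-d-1) ≠ 1` and the others are `1`
(`IsE.det`), which recovers the twist; the scalars `cᵢ` recover `kᵢ` up to inversion, and
`k₀² = q^(-d-1)` rules out inverting `k₀`. Conversely, `k₁` and `k₂` may be inverted freely in
`Good.exists_isE`. To invert `k₃`, pass from the common eigenvector `v_d` of `T₀` and `T₁` to a
common eigenvector of `T₀` and `T₃` by means of the symmetry `Tᵢ ↦ T₋ᵢ⁻¹`, `q ↦ q⁻¹`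
(`Good.unflip`); the eigenvalue of `T₃` there can be prescribed.
-/

universe u

namespace DAHA

variable {F : Type*} [Field F]

/-- Membership in the parameter set `EP_d`. -/
def EPmem (q : F) (d : ℕ) (k0 k1 k2 k3 : F) : Prop :=
  k0 ≠ 0 ∧ k1 ≠ 0 ∧ k2 ≠ 0 ∧ k3 ≠ 0 ∧ k0 ^ 2 = (q ^ (d + 1))⁻¹ ∧
  ∀ i : ℕ, Odd i → i ≤ d →
    k0 * k1 * k2 * k3 ≠ (q ^ i)⁻¹ ∧ k0 * k1⁻¹ * k2 * k3 ≠ (q ^ i)⁻¹ ∧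
    k0 * k1 * k2⁻¹ * k3 ≠ (q ^ i)⁻¹ ∧ k0 * k1 * k2 * k3⁻¹ ≠ (q ^ i)⁻¹

/-! ### Relations and symmetries -/

/-- Relations cut out by a central character: each `Tᵢ` satisfies `Tᵢ² = cᵢ Tᵢ - 1`
(that is, `Tᵢ + Tᵢ⁻¹ = cᵢ`), and `T₀ T₁ T₂ T₃ = q⁻¹`. -/
structure Good {V : Type*} [AddCommGroup V] [Module F V] (q : F) (c : ZMod 4 → F)
    (T : ZMod 4 → Module.End F V) : Prop where
  quad : ∀ i v, T i (T i v) = c i • T i v - v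
  prod : ∀ v, T 0 (T 1 (T 2 (T 3 v))) = q⁻¹ • v

/-- The relations of the infinite-dimensional module `M(k₀,k₁,k₂,k₃)`, imposed on a sequence of
vectors `v₀, v₁, …` of a module `V` (no linear independence is asked for). -/
structure MRel {V : Type*} [AddCommGroup V] [Module F V] (q k0 k1 k2 k3 : F)
    (T : ZMod 4 → Module.End F V) (v : ℕ → V) : Prop where
  t0z : T 0 (v 0) = k0 • v 0
  t0e : ∀ m : ℕ, T 0 (v (2 * m + 2)) =
    (k0⁻¹ * (q ^ (2 * m + 2))⁻¹ * (1 - q ^ (2 * m + 2)) * (1 - k0 ^ 2 * q ^ (2 * m + 2))) •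
      v (2 * m + 1) + (k0 + k0⁻¹ - k0⁻¹ * (q ^ (2 * m + 2))⁻¹) • v (2 * m + 2)
  t0o : ∀ m : ℕ, T 0 (v (2 * m + 1)) =
    (k0⁻¹ * (q ^ (2 * m + 2))⁻¹) • (v (2 * m + 1) - v (2 * m + 2))
  t1z : T 1 (v 0) = k1 • v 0 + k1⁻¹ • v 1
  t1e : ∀ m : ℕ, T 1 (v (2 * m + 2)) =
    (-(k1 * (1 - q ^ (2 * m + 2)) * (1 - k0 ^ 2 * q ^ (2 * m + 2)))) • v (2 * m + 1)
      + k1 • v (2 * m + 2) + k1⁻¹ • v (2 * m + 3)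
  t1o : ∀ m : ℕ, T 1 (v (2 * m + 1)) = k1⁻¹ • v (2 * m + 1)
  t2e : ∀ m : ℕ, T 2 (v (2 * m)) =
    (k0⁻¹ * k1⁻¹ * k3⁻¹ * (q ^ (2 * m + 1))⁻¹) • (v (2 * m) - v (2 * m + 1))
  t2o : ∀ m : ℕ, T 2 (v (2 * m + 1)) =
    ((k0 * k1 * k3 * q ^ (2 * m + 1))⁻¹ * (k0 * k1 * k3 * q ^ (2 * m + 1) - k2)
        * (k0 * k1 * k3 * q ^ (2 * m + 1) - k2⁻¹)) • v (2 * m)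
      + (k2 + k2⁻¹ - k0⁻¹ * k1⁻¹ * k3⁻¹ * (q ^ (2 * m + 1))⁻¹) • v (2 * m + 1)
  t3e : ∀ m : ℕ, T 3 (v (2 * m)) = k3 • v (2 * m)
  t3o : ∀ m : ℕ, T 3 (v (2 * m + 1)) =
    (-(k3⁻¹ * (k0 * k1 * k3 * q ^ (2 * m + 1) - k2)
        * (k0 * k1 * k3 * q ^ (2 * m + 1) - k2⁻¹))) • v (2 * m)
      + k3⁻¹ • v (2 * m + 1) + k3 • v (2 * m + 2)

section Relations

variable {V : Type*} [AddCommGroup V] [Module F V] {q : F} {c : ZMod 4 → F}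
  {T : ZMod 4 → Module.End F V}

/-- `T₁ T₂ T₃ T₀ = q⁻¹`, obtained by conjugating the product relation with `T₀`. -/
lemma Good.prod' (h : Good q c T) (v : V) : T 1 (T 2 (T 3 (T 0 v))) = q⁻¹ • v := by
  have h0 : ∀ x y, T 0 x = T 0 y → x = y := by
    intro x y hxy
    have e1 : x = c 0 • T 0 x - T 0 (T 0 x) := by rw [h.quad]; abel
    rw [e1, hxy, h.quad]; abel
  apply h0
  rw [h.prod, map_smul]

lemma Good.twist_one (h : Good q c T) : Good q (fun i => c (i + 1)) (twist T 1) where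
  quad i v := h.quad (i + 1) v
  prod v := h.prod' v

lemma Good.twist (h : Good q c T) (ε : ZMod 4) : Good q (fun i => c (i + ε)) (twist T ε) := by
  have key : ∀ n : ℕ, Good q (fun i => c (i + n)) (DAHA.twist T (n : ZMod 4)) := by
    intro n
    induction n with
    | zero => exact (by simpa using h : Good q (fun i => c (i + 0)) (fun i => T (i + 0)))
    | succ n ih =>
      have := ih.twist_one
      have e1 : ∀ i : ZMod 4, i + ((n + 1 : ℕ) : ZMod 4) = i + 1 + n := by
        intro i; push_cast; ring
      have e2 : DAHA.twist T ((n + 1 : ℕ) : ZMod 4) = DAHA.twist (DAHA.twist T n) 1 := by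
        funext i; simp only [DAHA.twist, e1]
      simp only [e1, e2]
      exact this
  have := key ε.val
  rwa [ZMod.natCast_zmod_val] at this

/-- The mirror image `Tᵢ ↦ T₋ᵢ⁻¹ = c₋ᵢ - T₋ᵢ` of an operator quadruple. It turns a
representation for `q` into one for `q⁻¹`. -/
def mirror (c : ZMod 4 → F) (T : ZMod 4 → Module.End F V) : ZMod 4 → Module.End F V :=
  fun i => c (-i) • (1 : Module.End F V) - T (-i)

lemma Good.mirror (hq : q ≠ 0) (h : Good q c T) :
    Good q⁻¹ (fun i => c (-i)) (mirror c T) where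
  quad i v := by
    simp only [DAHA.mirror, LinearMap.sub_apply, LinearMap.smul_apply, Module.End.one_apply,
      map_sub, map_smul, h.quad]
    module
  prod v := by
    have inv : ∀ i x, T i (c i • x - T i x) = x := by
      intro i x
      rw [map_sub, map_smul, h.quad]; abel
    have inv' : ∀ i x, c i • T i x - T i (T i x) = x := by
      intro i x
      rw [h.quad]; abel
    have h0 : ∀ i x y, T i x = T i y → x = y := by
      intro i x y hxy
      have hx := inv' i x
      have hy := inv' i y
      rw [hxy] at hx
      exact hx.symm.trans hy
    -- apply `T₁ T₂ T₃ T₀ = q⁻¹` to undo the inverses one after the other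
    change c 0 • (c 3 • (c 2 • (c 1 • v - T 1 v) - T 2 (c 1 • v - T 1 v)) -
        T 3 (c 2 • (c 1 • v - T 1 v) - T 2 (c 1 • v - T 1 v))) -
      T 0 (c 3 • (c 2 • (c 1 • v - T 1 v) - T 2 (c 1 • v - T 1 v)) -
        T 3 (c 2 • (c 1 • v - T 1 v) - T 2 (c 1 • v - T 1 v))) = q⁻¹⁻¹ • v
    apply h0 0
    rw [inv]
    apply h0 3
    rw [inv]
    apply h0 2
    rw [inv]
    apply h0 1
    rw [inv, map_smul, map_smul, map_smul, map_smul, h.prod', smul_smul, inv_inv,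
      mul_inv_cancel₀ hq, one_smul]

/-- One step of the construction of the sequence `v₀, v₁, …`: here `o, e, o', e'` stand for
`v_{i-1}, v_i, v_{i+1}, v_{i+2}` with `i` even, and `Q` for `q ^ i`. -/
lemma Good.step (h : Good q c T) (hq : q ≠ 0) {k0 k1 k2 k3 Q : F}
    (hk0 : k0 ≠ 0) (hk1 : k1 ≠ 0) (hk2 : k2 ≠ 0) (hk3 : k3 ≠ 0) (hQ : Q ≠ 0)
    (c0 : c 0 = k0 + k0⁻¹) (c1 : c 1 = k1 + k1⁻¹) (c2 : c 2 = k2 + k2⁻¹)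
    (c3 : c 3 = k3 + k3⁻¹) {o e o' e' : V}
    (h3 : T 3 e = k3 • e)
    (h0 : T 0 e = (k0⁻¹ * Q⁻¹ * (1 - Q) * (1 - k0 ^ 2 * Q)) • o
      + (k0 + k0⁻¹ - k0⁻¹ * Q⁻¹) • e)
    (h1 : T 1 o = k1⁻¹ • o)
    (ho' : T 1 e = (-(k1 * (1 - Q) * (1 - k0 ^ 2 * Q))) • o + k1 • e + k1⁻¹ • o')
    (he' : T 0 o' = (k0⁻¹ * (Q * q ^ 2)⁻¹) • (o' - e')) :
    T 1 o' = k1⁻¹ • o' ∧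
    T 2 e = (k0⁻¹ * k1⁻¹ * k3⁻¹ * (Q * q)⁻¹) • (e - o') ∧
    T 2 o' = ((k0 * k1 * k3 * (Q * q))⁻¹ * (k0 * k1 * k3 * (Q * q) - k2)
        * (k0 * k1 * k3 * (Q * q) - k2⁻¹)) • e
      + (k2 + k2⁻¹ - k0⁻¹ * k1⁻¹ * k3⁻¹ * (Q * q)⁻¹) • o' ∧
    T 0 e' = (k0⁻¹ * (Q * q ^ 2)⁻¹ * (1 - Q * q ^ 2) * (1 - k0 ^ 2 * (Q * q ^ 2))) • o'
      + (k0 + k0⁻¹ - k0⁻¹ * (Q * q ^ 2)⁻¹) • e' ∧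
    T 3 o' = (-(k3⁻¹ * (k0 * k1 * k3 * (Q * q) - k2)
        * (k0 * k1 * k3 * (Q * q) - k2⁻¹))) • e + k3⁻¹ • o' + k3 • e' ∧
    T 3 e' = k3 • e' := by
  have inv : ∀ i x, T i (c i • x - T i x) = x := by
    intro i x
    rw [map_sub, map_smul, h.quad]; abel
  have inj : ∀ i x y, T i x = T i y → x = y := by
    intro i x y hxy
    have e1 : x = c i • T i x - T i (T i x) := by rw [h.quad]; abel
    rw [e1, hxy, h.quad]; abel
  have eo' : o' = k1 • T 1 e + (k1 ^ 2 * (1 - Q) * (1 - k0 ^ 2 * Q)) • o - k1 ^ 2 • e := by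
    rw [ho']; match_scalars <;> field_simp <;> ring
  have ee' : e' = o' - (k0 * (Q * q ^ 2)) • T 0 o' := by
    rw [he']; match_scalars <;> field_simp; ring
  have r1 : T 1 o' = k1⁻¹ • o' := by
    rw [eo']
    simp only [map_add, map_sub, map_smul, h.quad, h1, c1]
    match_scalars <;> field_simp; ring
  have r2 : T 2 e = (k0⁻¹ * k1⁻¹ * k3⁻¹ * (Q * q)⁻¹) • (e - o') := by
    have : T 2 e = (k3⁻¹ * q⁻¹) • (c 1 • (c 0 • e - T 0 e) - T 1 (c 0 • e - T 0 e)) := by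
      apply inj 1
      apply inj 0
      rw [map_smul, map_smul, inv, inv, mul_smul, ← h.prod e, h3, map_smul, map_smul, map_smul,
        smul_smul, inv_mul_cancel₀ hk3, one_smul]
    rw [this, h0]
    simp only [map_add, map_sub, map_smul, ho', h1, c0, c1]
    match_scalars <;> field_simp <;> ring
  have r4 : T 2 o' = ((k0 * k1 * k3 * (Q * q))⁻¹ * (k0 * k1 * k3 * (Q * q) - k2)
        * (k0 * k1 * k3 * (Q * q) - k2⁻¹)) • e
      + (k2 + k2⁻¹ - k0⁻¹ * k1⁻¹ * k3⁻¹ * (Q * q)⁻¹) • o' := by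
    have : o' = e - (k0 * k1 * k3 * (Q * q)) • T 2 e := by
      rw [r2]; match_scalars <;> field_simp; ring
    rw [this]
    simp only [map_sub, map_smul, h.quad, c2]
    rw [r2]
    match_scalars <;> field_simp <;> ring
  have inv3 : ∀ x, T 0 (T 1 (T 2 x)) = q⁻¹ • (c 3 • x - T 3 x) := by
    intro x
    rw [← h.prod, inv]
  have r3 : T 3 o' = (-(k3⁻¹ * (k0 * k1 * k3 * (Q * q) - k2)
        * (k0 * k1 * k3 * (Q * q) - k2⁻¹))) • e + k3⁻¹ • o' + k3 • e' := by
    have he := inv3 e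
    rw [r2, h3, c3] at he
    have ho := inv3 o'
    rw [r4] at ho
    have t3 : T 3 o' = c 3 • o' - q • T 0 (T 1 (T 2 o')) := by
      rw [inv3, smul_smul, mul_inv_cancel₀ hq, one_smul]; abel
    have t01 : T 0 (T 1 e) = T 0 (T 1 o') + (k0 * k1 * k3 * Q) • ((k3 + k3⁻¹) • e - k3 • e) := by
      have : T 0 (T 1 e) = T 0 (T 1 o') + (k0 * k1 * k3 * (Q * q)) •
          T 0 (T 1 ((k0⁻¹ * k1⁻¹ * k3⁻¹ * (Q * q)⁻¹) • (e - o'))) := by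
        simp only [map_smul, map_sub]
        match_scalars <;> field_simp; ring
      rw [this, he]
      match_scalars <;> field_simp
    rw [t3, r4]
    simp only [map_add, map_smul]
    rw [t01, r1, map_smul, he', c3]
    match_scalars <;> field_simp <;> ring
  refine ⟨r1, r2, r4, ?_, r3, ?_⟩
  · rw [ee']
    simp only [map_sub, map_smul, h.quad, c0]
    rw [he']
    match_scalars <;> field_simp <;> ring
  · have : e' = k3⁻¹ • T 3 o' + (k3⁻¹ ^ 2 * (k0 * k1 * k3 * (Q * q) - k2)
        * (k0 * k1 * k3 * (Q * q) - k2⁻¹)) • e - k3⁻¹ ^ 2 • o' := by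
      rw [r3]; match_scalars <;> field_simp <;> ring
    rw [this]
    simp only [map_add, map_sub, map_smul, h.quad, c3, h3]
    rw [r3]
    match_scalars <;> field_simp <;> ring

end Relations

/-! ### The module `M(k₀,k₁,k₂,k₃)` -/

section Verma

variable {V : Type*} [AddCommGroup V] [Module F V] {q : F} {c : ZMod 4 → F}
  {T : ZMod 4 → Module.End F V}

/-- Pairs `(v_{2m-1}, v_{2m})` of the sequence generated by `v₀`, with `v_{-1} = 0`. The formulas
solve the relations for `T₁ v_{2m}` and `T₀ v_{2m+1}` in `MRel` for `v_{2m+1}` and `v_{2m+2}`. -/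
def vpair (q k0 k1 : F) (T : ZMod 4 → Module.End F V) (v0 : V) : ℕ → V × V
  | 0 => (0, v0)
  | m + 1 =>
    let p := vpair q k0 k1 T v0 m
    let o := k1 • T 1 p.2 + (k1 ^ 2 * (1 - q ^ (2 * m)) * (1 - k0 ^ 2 * q ^ (2 * m))) • p.1
      - k1 ^ 2 • p.2
    (o, o - (k0 * (q ^ (2 * m) * q ^ 2)) • T 0 o)

/-- Universal property of `M(k₀,k₁,k₂,k₃)`: a common eigenvector of `T₀` and `T₃` with
eigenvalues `k₀` and `k₃` is the first term of a sequence satisfying the relations of `M`. -/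
lemma Good.exists_mrel (h : Good q c T) (hq : q ≠ 0) {k0 k1 k2 k3 : F}
    (hk0 : k0 ≠ 0) (hk1 : k1 ≠ 0) (hk2 : k2 ≠ 0) (hk3 : k3 ≠ 0)
    (c0 : c 0 = k0 + k0⁻¹) (c1 : c 1 = k1 + k1⁻¹) (c2 : c 2 = k2 + k2⁻¹)
    (c3 : c 3 = k3 + k3⁻¹) {v0 : V} (h0 : T 0 v0 = k0 • v0) (h3 : T 3 v0 = k3 • v0) :
    ∃ v : ℕ → V, v 0 = v0 ∧ MRel q k0 k1 k2 k3 T v := by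
  set P := vpair q k0 k1 T v0 with hP
  have hP0 : P 0 = (0, v0) := rfl
  have ho : ∀ m, T 1 (P m).2 = (-(k1 * (1 - q ^ (2 * m)) * (1 - k0 ^ 2 * q ^ (2 * m)))) • (P m).1
      + k1 • (P m).2 + k1⁻¹ • (P (m + 1)).1 := by
    intro m
    have : (P (m + 1)).1 = k1 • T 1 (P m).2 +
      (k1 ^ 2 * (1 - q ^ (2 * m)) * (1 - k0 ^ 2 * q ^ (2 * m))) • (P m).1 - k1 ^ 2 • (P m).2 := rfl
    rw [this]
    match_scalars <;> field_simp <;> ring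
  have he : ∀ m, T 0 (P (m + 1)).1 = (k0⁻¹ * (q ^ (2 * m) * q ^ 2)⁻¹) •
      ((P (m + 1)).1 - (P (m + 1)).2) := by
    intro m
    have : (P (m + 1)).2 = (P (m + 1)).1 - (k0 * (q ^ (2 * m) * q ^ 2)) • T 0 (P (m + 1)).1 := rfl
    rw [this, sub_sub_cancel, smul_smul]
    field_simp
    simp
  have inv : ∀ m, T 3 (P m).2 = k3 • (P m).2 ∧
      T 0 (P m).2 = (k0⁻¹ * (q ^ (2 * m))⁻¹ * (1 - q ^ (2 * m)) * (1 - k0 ^ 2 * q ^ (2 * m))) •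
        (P m).1 + (k0 + k0⁻¹ - k0⁻¹ * (q ^ (2 * m))⁻¹) • (P m).2 ∧
      T 1 (P m).1 = k1⁻¹ • (P m).1 := by
    intro m
    induction m with
    | zero => simp [hP0, h0, h3]
    | succ m ih =>
      obtain ⟨a, b, d⟩ := ih
      obtain ⟨s1, s2, s3, s4, s5, s6⟩ := h.step hq hk0 hk1 hk2 hk3 (pow_ne_zero (2 * m) hq)
        c0 c1 c2 c3 a b d (ho m) (he m)
      refine ⟨s6, ?_, s1⟩
      rw [show 2 * (m + 1) = 2 * m + 2 by ring, pow_add]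
      exact s4
  have st := fun m => h.step hq hk0 hk1 hk2 hk3 (pow_ne_zero (2 * m) hq)
        c0 c1 c2 c3 (inv m).1 (inv m).2.1 (inv m).2.2 (ho m) (he m)
  obtain ⟨w, hw⟩ : ∃ w : ℕ → V,
      w = fun i => if Even i then (P (i / 2)).2 else (P (i / 2 + 1)).1 := ⟨_, rfl⟩
  have we : ∀ m, w (2 * m) = (P m).2 := by intro m; simp [hw]
  have wo : ∀ m, w (2 * m + 1) = (P (m + 1)).1 := by
    intro m
    have : (2 * m + 1) / 2 = m := by omega
    simp [hw, this]
  have we2 : ∀ m, w (2 * m + 2) = (P (m + 1)).2 := fun m => we (m + 1)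
  have wo3 : ∀ m, w (2 * m + 3) = (P (m + 1 + 1)).1 := fun m => wo (m + 1)
  have w0 : w 0 = v0 := by rw [show (0 : ℕ) = 2 * 0 by rfl, we, hP0]
  have w1 : w 1 = (P 1).1 := wo 0
  have q1 : ∀ m, q ^ (2 * m + 1) = q ^ (2 * m) * q := fun m => pow_succ _ _
  have q2 : ∀ m, q ^ (2 * m + 2) = q ^ (2 * m) * q ^ 2 := fun m => pow_add _ _ _
  refine ⟨w, w0, ?_, ?_, ?_, ?_, ?_, ?_, ?_, ?_, ?_, ?_⟩
  · rw [w0, h0]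
  · intro m; rw [we2, wo, q2]; exact (st m).2.2.2.1
  · intro m; rw [we2, wo, q2]; exact he m
  · rw [w0, w1]
    have := ho 0
    simpa [hP0] using this
  · intro m; rw [we2, wo, wo3]; exact ho (m + 1)
  · intro m; rw [wo]; exact (st m).1
  · intro m; rw [we, wo, q1]; exact (st m).2.1
  · intro m; rw [we, wo, q1]; exact (st m).2.2.1
  · intro m; rw [we]; exact (inv m).1
  · intro m; rw [we, wo, we2, q1]; exact (st m).2.2.2.2.1

lemma MRel.map {V' : Type*} [AddCommGroup V'] [Module F V'] {T' : ZMod 4 → Module.End F V'}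
    {k0 k1 k2 k3 : F} {v : ℕ → V} (h : MRel q k0 k1 k2 k3 T v) (S : V →ₗ[F] V')
    (hS : ∀ i v, S (T i v) = T' i (S v)) : MRel q k0 k1 k2 k3 T' (fun i => S (v i)) where
  t0z := by rw [← hS, h.t0z, map_smul]
  t0e m := by rw [← hS, h.t0e, map_add, map_smul, map_smul]
  t0o m := by rw [← hS, h.t0o, map_smul, map_sub]
  t1z := by rw [← hS, h.t1z, map_add, map_smul, map_smul]
  t1e m := by rw [← hS, h.t1e, map_add, map_add, map_smul, map_smul, map_smul]
  t1o m := by rw [← hS, h.t1o, map_smul]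
  t2e m := by rw [← hS, h.t2e, map_smul, map_sub]
  t2o m := by rw [← hS, h.t2o, map_add, map_smul, map_smul]
  t3e m := by rw [← hS, h.t3e, map_smul]
  t3o m := by rw [← hS, h.t3o, map_add, map_add, map_smul, map_smul, map_smul]

/-- An invariant subspace that contains `v₀` contains the whole sequence. -/
lemma MRel.mem {k0 k1 k2 k3 : F} {v : ℕ → V} (h : MRel q k0 k1 k2 k3 T v) (hq : q ≠ 0)
    (hk0 : k0 ≠ 0) (hk1 : k1 ≠ 0) {W : Submodule F V} (hW : ∀ i, ∀ w ∈ W, T i w ∈ W)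
    (h0 : v 0 ∈ W) (i : ℕ) : v i ∈ W := by
  have key : ∀ m, v (2 * m) ∈ W ∧ v (2 * m + 1) ∈ W := by
    intro m
    induction m with
    | zero =>
      refine ⟨h0, ?_⟩
      have : v 1 = k1 • (T 1 (v 0) - k1 • v 0) := by
        rw [h.t1z]; match_scalars <;> field_simp; ring
      simp only [mul_zero, zero_add]
      rw [this]
      exact W.smul_mem _ (W.sub_mem (hW _ _ h0) (W.smul_mem _ h0))
    | succ m ih =>
      have e2 : v (2 * m + 2) ∈ W := by
        have : v (2 * m + 2) = v (2 * m + 1) - (k0 * q ^ (2 * m + 2)) • T 0 (v (2 * m + 1)) := by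
          rw [h.t0o]; match_scalars <;> field_simp; ring
        rw [this]
        exact W.sub_mem ih.2 (W.smul_mem _ (hW _ _ ih.2))
      refine ⟨e2, ?_⟩
      have : v (2 * m + 3) = k1 • (T 1 (v (2 * m + 2)) - k1 • v (2 * m + 2) +
          (k1 * (1 - q ^ (2 * m + 2)) * (1 - k0 ^ 2 * q ^ (2 * m + 2))) • v (2 * m + 1)) := by
        rw [h.t1e]; match_scalars <;> field_simp <;> ring
      rw [show 2 * (m + 1) + 1 = 2 * m + 3 by ring, this]
      exact W.smul_mem _ (W.add_mem (W.sub_mem (hW _ _ e2) (W.smul_mem _ e2)) (W.smul_mem _ ih.2))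
  obtain ⟨m, rfl | rfl⟩ := Nat.even_or_odd' i
  exacts [(key m).1, (key m).2]

/-- If vectors satisfying the relations of `M(k₀,k₁,k₂,k₃)` span `V`, then `V` is a
representation of `H_q`. -/
lemma MRel.good {k0 k1 k2 k3 : F} {v : ℕ → V} (h : MRel q k0 k1 k2 k3 T v) (hq : q ≠ 0)
    (hk0 : k0 ≠ 0) (hk1 : k1 ≠ 0) (hk2 : k2 ≠ 0) (hk3 : k3 ≠ 0)
    (c0 : c 0 = k0 + k0⁻¹) (c1 : c 1 = k1 + k1⁻¹) (c2 : c 2 = k2 + k2⁻¹)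
    (c3 : c 3 = k3 + k3⁻¹) (hs : Submodule.span F (Set.range v) = ⊤) : Good q c T := by
  -- a linear identity holds as soon as it holds on `v₀`, on all `v_{2m+1}` and on all `v_{2m+2}`
  have ext : ∀ f g : Module.End F V, f (v 0) = g (v 0) → (∀ m, f (v (2 * m + 1)) =
      g (v (2 * m + 1))) → (∀ m, f (v (2 * m + 2)) = g (v (2 * m + 2))) → f = g := by
    intro f g h0 h1 h2
    refine LinearMap.ext_on_range hs fun i => ?_
    obtain ⟨m, rfl | rfl⟩ := Nat.even_or_odd' i
    · cases m with
      | zero => exact h0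
      | succ m => exact h2 m
    · exact h1 m
  have t2z := h.t2e 0
  have t3z := h.t3e 0
  have t2e := fun m => h.t2e (m + 1)
  have t3e := fun m => h.t3e (m + 1)
  have t1o := fun m => h.t1o (m + 1)
  have t0o := fun m => h.t0o (m + 1)
  have t2o := fun m => h.t2o (m + 1)
  have t3o := fun m => h.t3o (m + 1)
  have t1o0 := h.t1o 0
  have t2o0 := h.t2o 0
  have t0o0 := h.t0o 0
  have t3o0 := h.t3o 0
  have t1e0 := h.t1e 0
  have t0e0 := h.t0e 0
  have t2e0 := h.t2e 1
  simp only [mul_add, mul_one, add_assoc, Nat.reduceAdd] at t2e t3e t1o t0o t2o t3o t2e0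
  simp only [mul_zero, zero_add] at t2z t3z t1o0 t2o0 t0o0 t3o0 t1e0 t0e0
  have t1o1 := t1o 0
  simp only [mul_zero, zero_add] at t1o1
  have quad : ∀ i, T i * T i = c i • T i - 1 := by
    intro i
    apply ext
    · simp only [Module.End.mul_apply, LinearMap.smul_apply, Module.End.one_apply,
        LinearMap.sub_apply]
      fin_cases i <;> simp only [Fin.zero_eta, Fin.mk_one, Fin.reduceFinMk]
      · change T 0 (T 0 (v 0)) = c 0 • T 0 (v 0) - v 0
        simp only [h.t0z, map_smul, c0]
        match_scalars; field_simp; ring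
      · change T 1 (T 1 (v 0)) = c 1 • T 1 (v 0) - v 0
        simp only [h.t1z, t1o0, map_add, map_smul, c1]
        match_scalars <;> field_simp; ring
      · change T 2 (T 2 (v 0)) = c 2 • T 2 (v 0) - v 0
        simp only [t2z, t2o0, map_sub, map_smul, c2]
        match_scalars <;> field_simp <;> ring
      · change T 3 (T 3 (v 0)) = c 3 • T 3 (v 0) - v 0
        simp only [t3z, map_smul, c3]
        match_scalars; field_simp; ring
    · intro m
      simp only [Module.End.mul_apply, LinearMap.smul_apply, Module.End.one_apply,
        LinearMap.sub_apply]
      fin_cases i <;> simp only [Fin.zero_eta, Fin.mk_one, Fin.reduceFinMk]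
      · change T 0 (T 0 (v (2 * m + 1))) = c 0 • T 0 (v (2 * m + 1)) - v (2 * m + 1)
        simp only [h.t0o, h.t0e, map_sub, map_smul, c0]
        match_scalars <;> field_simp <;> ring
      · change T 1 (T 1 (v (2 * m + 1))) = c 1 • T 1 (v (2 * m + 1)) - v (2 * m + 1)
        simp only [h.t1o, map_smul, c1]
        match_scalars; field_simp; ring
      · change T 2 (T 2 (v (2 * m + 1))) = c 2 • T 2 (v (2 * m + 1)) - v (2 * m + 1)
        simp only [h.t2o, h.t2e, map_add, map_smul, c2]
        match_scalars <;> field_simp <;> ring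
      · change T 3 (T 3 (v (2 * m + 1))) = c 3 • T 3 (v (2 * m + 1)) - v (2 * m + 1)
        simp only [h.t3o, h.t3e, t3e, map_add, map_smul, c3]
        match_scalars <;> field_simp <;> ring
    · intro m
      simp only [Module.End.mul_apply, LinearMap.smul_apply, Module.End.one_apply,
        LinearMap.sub_apply]
      fin_cases i <;> simp only [Fin.zero_eta, Fin.mk_one, Fin.reduceFinMk]
      · change T 0 (T 0 (v (2 * m + 2))) = c 0 • T 0 (v (2 * m + 2)) - v (2 * m + 2)
        simp only [h.t0e, h.t0o, map_add, map_smul, c0]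
        match_scalars <;> field_simp <;> ring
      · change T 1 (T 1 (v (2 * m + 2))) = c 1 • T 1 (v (2 * m + 2)) - v (2 * m + 2)
        simp only [h.t1e, h.t1o, t1o, map_add, map_smul, c1]
        match_scalars <;> field_simp <;> ring
      · change T 2 (T 2 (v (2 * m + 2))) = c 2 • T 2 (v (2 * m + 2)) - v (2 * m + 2)
        simp only [t2o, t2e, map_sub, map_smul, c2]
        match_scalars <;> field_simp <;> ring
      · change T 3 (T 3 (v (2 * m + 2))) = c 3 • T 3 (v (2 * m + 2)) - v (2 * m + 2)
        simp only [t3e, map_smul, c3]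
        match_scalars; field_simp; ring
  have prod : T 0 * T 1 * T 2 * T 3 = q⁻¹ • (1 : Module.End F V) := by
    apply ext
    · simp only [Module.End.mul_apply, LinearMap.smul_apply, Module.End.one_apply, t3z, map_smul,
        t2z, map_sub, h.t1z, t1o0, t0o0, map_add, h.t0z]
      match_scalars <;> field_simp <;> ring
    · intro m
      cases m with
      | zero =>
        simp only [Module.End.mul_apply, LinearMap.smul_apply, Module.End.one_apply, t3o0,
          map_smul, mul_zero, zero_add, t2z, t2o0, t2e0, map_sub, map_add, t1o0, h.t1z, t1e0, t1o1,
          h.t0z, t0e0, t0o0]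
        match_scalars <;> field_simp <;> ring
      | succ m =>
        have t2e2 := h.t2e (m + 2)
        have t1e2 := h.t1e (m + 1)
        have t1o2 := h.t1o (m + 2)
        have t0e2 := h.t0e (m + 1)
        simp only [mul_add, mul_one, add_assoc, Nat.reduceAdd, Nat.reduceMul] at t2e2 t1e2 t1o2 t0e2
        simp only [Module.End.mul_apply, LinearMap.smul_apply, Module.End.one_apply, t3o,
          map_smul, mul_add, mul_one, add_assoc, Nat.reduceAdd, t2e, t2o, t2e2, map_sub, map_add,
          t1o, h.t1e, t1e2, t1o2, h.t0e, h.t0o, t0o, t0e2]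
        match_scalars <;> field_simp <;> ring
    · intro m
      simp only [Module.End.mul_apply, LinearMap.smul_apply, Module.End.one_apply, t3e, map_smul,
        t2e, map_sub, map_add, t1o, h.t1e, h.t0o, h.t0e, t0o]
      match_scalars <;> field_simp <;> ring
  exact ⟨fun i v => by simpa using congrArg (fun f => f v) (quad i),
    fun v => by simpa using congrArg (fun f => f v) prod⟩

end Verma

/-! ### Cyclic representations of odd dimension, and a determinant formula -/

section Cyclic

variable {V : Type*} [AddCommGroup V] [Module F V] {q : F} {c : ZMod 4 → F}
  {T : ZMod 4 → Module.End F V}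

/-- `v` generates the representation: no proper invariant subspace contains it. -/
def Gen (T : ZMod 4 → Module.End F V) (v : V) : Prop :=
  ∀ W : Submodule F V, (∀ i, ∀ w ∈ W, T i w ∈ W) → v ∈ W → W = ⊤

lemma MRel.apply_mem {k0 k1 k2 k3 : F} {v : ℕ → V} (h : MRel q k0 k1 k2 k3 T v)
    {W : Submodule F V} {i : ℕ} (hW : ∀ l, l ≤ i + 1 → v l ∈ W) (j : ZMod 4) :
    T j (v i) ∈ W := by
  obtain ⟨m, rfl | rfl⟩ := Nat.even_or_odd' i
  · have a := hW (2 * m) (by omega)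
    have b := hW (2 * m + 1) (by omega)
    fin_cases j <;> simp only [Fin.zero_eta, Fin.mk_one, Fin.reduceFinMk]
    · cases m with
      | zero => exact h.t0z ▸ W.smul_mem _ a
      | succ m =>
        change T 0 (v (2 * m + 2)) ∈ W
        rw [h.t0e]
        exact W.add_mem (W.smul_mem _ (hW _ (by omega))) (W.smul_mem _ a)
    · cases m with
      | zero => exact h.t1z ▸ W.add_mem (W.smul_mem _ a) (W.smul_mem _ b)
      | succ m =>
        change T 1 (v (2 * m + 2)) ∈ W
        rw [h.t1e]
        exact W.add_mem (W.add_mem (W.smul_mem _ (hW _ (by omega))) (W.smul_mem _ a))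
          (W.smul_mem _ b)
    · exact (h.t2e m).symm ▸ W.smul_mem _ (W.sub_mem a b)
    · exact (h.t3e m).symm ▸ W.smul_mem _ a
  · have z := hW (2 * m) (by omega)
    have a := hW (2 * m + 1) (by omega)
    have b := hW (2 * m + 2) (by omega)
    fin_cases j <;> simp only [Fin.zero_eta, Fin.mk_one, Fin.reduceFinMk]
    · exact (h.t0o m).symm ▸ W.smul_mem _ (W.sub_mem a b)
    · exact (h.t1o m).symm ▸ W.smul_mem _ a
    · exact (h.t2o m).symm ▸ W.add_mem (W.smul_mem _ z) (W.smul_mem _ a)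
    · exact (h.t3o m).symm ▸ W.add_mem (W.add_mem (W.smul_mem _ z) (W.smul_mem _ a))
        (W.smul_mem _ b)

/-- If `v₀` generates `V`, then the first `dim V` terms of the sequence form a basis of `V`. -/
lemma MRel.exists_basis [FiniteDimensional F V] {k0 k1 k2 k3 : F} {v : ℕ → V}
    (h : MRel q k0 k1 k2 k3 T v) (hg : Gen T (v 0)) {n : ℕ} (hn : Module.finrank F V = n) :
    ∃ b : Module.Basis (Fin n) F V, ∀ i : Fin n, b i = v i := by
  have key : ∀ m, m < n → v m ∉ Submodule.span F (Set.range fun i : Fin m => v i) := by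
    intro m hm hv
    set U := Submodule.span F (Set.range fun i : Fin m => v i) with hU
    have hlt : ∀ l, l ≤ m → v l ∈ U := by
      intro l hl
      rcases hl.lt_or_eq with hl | rfl
      · exact Submodule.subset_span ⟨⟨l, hl⟩, rfl⟩
      · exact hv
    have inv : ∀ j, ∀ w ∈ U, T j w ∈ U := by
      intro j w hw
      have : U ≤ U.comap (T j) := by
        rw [hU, Submodule.span_le]
        rintro _ ⟨i, rfl⟩
        exact h.apply_mem (fun l hl => hlt l (by omega)) j
      exact this hw
    have htop := hg U inv (hlt 0 (Nat.zero_le _))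
    have h1 := finrank_range_le_card (R := F) (fun i : Fin m => v i)
    rw [Set.finrank, ← hU, htop, finrank_top, hn, Fintype.card_fin] at h1
    omega
  have li : ∀ m, m ≤ n → LinearIndependent F (fun i : Fin m => v i) := by
    intro m
    induction m with
    | zero => intro _; exact linearIndependent_empty_type
    | succ m ih =>
      intro hm
      rw [linearIndependent_finSucc']
      exact ⟨ih (by omega), key m (by omega)⟩
  refine ⟨basisOfLinearIndependentOfCardEqFinrank' _ (li n le_rfl) (by simp [hn]), fun i => by simp⟩

/-- Roots of `x² = (k + k⁻¹) x - 1`. -/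
lemma eq_or_eq_inv {x k a : F} (hk : k ≠ 0) (ha : a = k + k⁻¹) (h : x * x = a * x - 1) :
    x = k ∨ x = k⁻¹ := by
  have : (x - k) * (x - k⁻¹) = 0 := by
    subst ha
    have : k * k⁻¹ = 1 := mul_inv_cancel₀ hk
    linear_combination h + this
  rcases mul_eq_zero.1 this with h | h
  · exact Or.inl (sub_eq_zero.1 h)
  · exact Or.inr (sub_eq_zero.1 h)

/-- The eigenvalue of a left eigenvector of `Tᵢ` is a root of the quadratic relation. -/
lemma Good.left_eigen (h : Good q c T) {i : ZMod 4} {k l : F} (hk : k ≠ 0) (hc : c i = k + k⁻¹)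
    {f : V →ₗ[F] F} {x : V} (hx : f x = 1) (hf : ∀ y, f (T i y) = l * f y) : l = k ∨ l = k⁻¹ := by
  refine eq_or_eq_inv hk hc ?_
  have := congrArg f (h.quad i x)
  simpa [hf, hx] using this

/-- A cyclic representation of odd dimension `n` generated by a common eigenvector of `T₀` and
`T₃` forces `k₀ k₁^{±1} k₂^{±1} k₃ = q⁻ⁿ` for some choice of signs: the coordinate along the last
basis vector is a common left eigenvector of `T₁` and `T₂`. -/
lemma MRel.odd_dim [FiniteDimensional F V] (hG : Good q c T) (hq : q ≠ 0) {k0 k1 k2 k3 : F}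
    (hk0 : k0 ≠ 0) (hk1 : k1 ≠ 0) (hk2 : k2 ≠ 0) (hk3 : k3 ≠ 0)
    (c1 : c 1 = k1 + k1⁻¹) (c2 : c 2 = k2 + k2⁻¹)
    {v : ℕ → V} (h : MRel q k0 k1 k2 k3 T v) (hg : Gen T (v 0)) {m : ℕ}
    (hn : Module.finrank F V = 2 * m + 1) :
    k0 * k1 * k2 * k3 = (q ^ (2 * m + 1))⁻¹ ∨ k0 * k1⁻¹ * k2 * k3 = (q ^ (2 * m + 1))⁻¹ ∨
    k0 * k1 * k2⁻¹ * k3 = (q ^ (2 * m + 1))⁻¹ ∨ k0 * k1⁻¹ * k2⁻¹ * k3 = (q ^ (2 * m + 1))⁻¹ := by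
  obtain ⟨b, hb⟩ := h.exists_basis hg hn
  set f : V →ₗ[F] F := b.coord (Fin.last (2 * m)) with hf
  have fv : ∀ i, i < 2 * m → f (v i) = 0 := by
    intro i hi
    have := hb ⟨i, by omega⟩
    simp only at this
    rw [← this, hf, Module.Basis.coord_apply, Module.Basis.repr_self, Finsupp.single_eq_of_ne]
    simp [Fin.ext_iff]; omega
  have fl : f (v (2 * m)) = 1 := by
    have := hb (Fin.last (2 * m))
    simp only [Fin.val_last] at this
    rw [← this, hf, Module.Basis.coord_apply, Module.Basis.repr_self, Finsupp.single_eq_same]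
  set x := f (v (2 * m + 1)) with hx
  have hext : ∀ (j : ZMod 4) (l : F), (∀ i, i < 2 * m + 1 → f (T j (v i)) = l * f (v i)) →
      ∀ y, f (T j y) = l * f y := by
    intro j l hl y
    have : f ∘ₗ T j = l • f := b.ext fun i => by
      rw [hb]; simpa using hl i i.2
    simpa using congrArg (fun g => g y) this
  have e1 := hG.left_eigen hk1 c1 fl (l := k1 + k1⁻¹ * x) (hext 1 _ ?_)
  have e2 := hG.left_eigen hk2 c2 fl (l := k0⁻¹ * k1⁻¹ * k3⁻¹ * (q ^ (2 * m + 1))⁻¹ * (1 - x))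
    (hext 2 _ ?_)
  · rcases e1 with e1 | e1
    · have x0 : x = 0 := by
        have : k1⁻¹ * x = 0 := by linear_combination e1
        exact (mul_eq_zero.1 this).resolve_left (inv_ne_zero hk1)
      rw [x0] at e2
      rcases e2 with e2 | e2
      · left; rw [← e2]; field_simp; ring
      · right; right; left; rw [← e2]; field_simp; ring
    · have x0 : 1 - x = k1 ^ 2 := by
        field_simp at e1
        linear_combination -e1
      rw [x0] at e2
      rcases e2 with e2 | e2
      · right; left; rw [← e2]; field_simp
      · right; right; right; rw [← e2]; field_simp
  · intro i hi
    obtain ⟨l, rfl | rfl⟩ := Nat.even_or_odd' i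
    · rw [h.t2e, map_smul, map_sub]
      rcases (show l < m ∨ l = m by omega) with hl | rfl
      · rw [fv _ (by omega), fv _ (by omega)]; simp
      · rw [fl, ← hx]; simp
    · rw [h.t2o, map_add, map_smul, map_smul, fv _ (by omega), fv _ (by omega)]; simp
  · intro i hi
    obtain ⟨l, rfl | rfl⟩ := Nat.even_or_odd' i
    · cases l with
      | zero =>
        rw [mul_zero, h.t1z, map_add, map_smul, map_smul]
        rcases (show 0 < m ∨ m = 0 by omega) with hl | rfl
        · rw [fv _ (by omega), fv _ (by omega)]; simp
        · simp only [mul_zero, zero_add] at fl hx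
          rw [fl, ← hx]; simp
      | succ l =>
        change f (T 1 (v (2 * l + 2))) = _ * f (v (2 * l + 2))
        rw [h.t1e, map_add, map_add, map_smul, map_smul, map_smul, fv (2 * l + 1) (by omega)]
        rcases (show l + 1 < m ∨ m = l + 1 by omega) with hl | rfl
        · rw [fv _ (by omega), fv _ (by omega)]; simp
        · rw [show 2 * (l + 1) = 2 * l + 2 by ring] at fl hx
          rw [fl, ← hx]; simp
    · rw [h.t1o, map_smul, fv _ (by omega)]; simp

/-- Determinant of an operator that is a scalar on the span of half of the basis vectors and
upper triangular modulo this span. -/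
lemma det_half {m : ℕ} (b : Module.Basis (Fin (2 * m)) F V) (f : Module.End F V)
    (p : Fin (2 * m) → Prop) [DecidablePred p] (k : F) (d : Fin (2 * m) → F)
    (hp : ∀ j, p j → f (b j) = k • b j)
    (hd : ∀ j, ¬ p j → b.repr (f (b j)) j = d j)
    (ht : ∀ i j, ¬ p i → ¬ p j → j < i → b.repr (f (b j)) i = 0) :
    LinearMap.det f = k ^ Fintype.card {i // p i} * ∏ i : {i // ¬ p i}, d i := by
  rw [← LinearMap.det_toMatrix b, Matrix.twoBlockTriangular_det _ p]
  · congr 1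
    · have : (LinearMap.toMatrix b b f).toSquareBlockProp p = k • (1 : Matrix _ _ F) := by
        ext i j
        simp only [Matrix.toSquareBlockProp_def, Matrix.of_apply, LinearMap.toMatrix_apply,
          hp j j.2, map_smul, Module.Basis.repr_self, Matrix.smul_apply, Matrix.one_apply,
          Finsupp.smul_apply, Finsupp.single_apply, Subtype.ext_iff, eq_comm]
      rw [this, Matrix.det_smul, Matrix.det_one, mul_one]
    · rw [Matrix.det_of_isUpperTriangular]
      · refine Finset.prod_congr rfl fun i _ => ?_
        simp only [Matrix.toSquareBlockProp_def, Matrix.of_apply, LinearMap.toMatrix_apply]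
        exact hd i i.2
      · intro i j hij
        simp only [Matrix.toSquareBlockProp_def, Matrix.of_apply, LinearMap.toMatrix_apply]
        exact ht i j i.2 j.2 hij
  · intro i hi j hj
    rw [LinearMap.toMatrix_apply, hp j hj, map_smul, Module.Basis.repr_self, Finsupp.smul_apply,
      Finsupp.single_eq_of_ne (by rintro rfl; exact hi hj), smul_zero]

lemma card_even (m : ℕ) : Fintype.card {i : Fin (2 * m) // Even (i : ℕ)} = m := by
  refine (Fintype.card_congr (β := Fin m) ⟨fun i => ⟨i.1 / 2, by omega⟩,
    fun i => ⟨⟨2 * i, by omega⟩, by simp⟩, ?_, ?_⟩).trans (Fintype.card_fin m)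
  · rintro ⟨i, hi⟩
    obtain ⟨l, hl⟩ := hi
    ext; simp; omega
  · intro i; ext; simp

lemma card_not_even (m : ℕ) : Fintype.card {i : Fin (2 * m) // ¬ Even (i : ℕ)} = m := by
  rw [Fintype.card_subtype_compl, card_even, Fintype.card_fin]; omega

end Cyclic

/-! ### Cyclic representations of even dimension -/

section Determinants

variable {V : Type*} [AddCommGroup V] [Module F V] {q : F} {c : ZMod 4 → F}
  {T : ZMod 4 → Module.End F V}

lemma Good.eigen (h : Good q c T) {i : ZMod 4} {k : F} {v : V} (hv : v ≠ 0)
    (hk : T i v = k • v) : k ≠ 0 ∧ c i = k + k⁻¹ := by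
  have h1 : (k * k - c i * k + 1) • v = 0 := by
    have := h.quad i v
    rw [hk, map_smul, hk] at this
    rw [add_smul, sub_smul, mul_smul, mul_smul, one_smul, this]; abel
  have h2 := (smul_eq_zero.1 h1).resolve_right hv
  have hk0 : k ≠ 0 := by rintro rfl; simp at h2
  refine ⟨hk0, ?_⟩
  field_simp
  linear_combination -h2

lemma exists_add_inv [IsAlgClosed F] (a : F) : ∃ k : F, k ≠ 0 ∧ a = k + k⁻¹ := by
  obtain ⟨k, hk⟩ := IsAlgClosed.exists_root
    (Polynomial.C 1 * Polynomial.X ^ 2 + Polynomial.C (-a) * Polynomial.X + Polynomial.C 1) (by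
      rw [Polynomial.degree_quadratic one_ne_zero]; norm_num)
  simp only [Polynomial.IsRoot, Polynomial.eval_add, Polynomial.eval_mul, Polynomial.eval_C,
    Polynomial.eval_pow, Polynomial.eval_X] at hk
  have hk0 : k ≠ 0 := by rintro rfl; simp at hk
  refine ⟨k, hk0, ?_⟩
  field_simp
  linear_combination -hk

/-- Coordinates of the basis vectors of a representation generated by `v₀`. -/
lemma repr_basis {n : ℕ} (b : Module.Basis (Fin n) F V) {v : ℕ → V}
    (hb : ∀ i : Fin n, b i = v i) {i : ℕ} (hi : i < n) (j : Fin n) :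
    b.repr (v i) j = if i = j then 1 else 0 := by
  have := hb ⟨i, hi⟩
  simp only at this
  rw [← this, Module.Basis.repr_self, Finsupp.single_apply]
  simp [Fin.ext_iff]

/-- `T₁` is `k₁⁻¹` on the vectors of odd index and has diagonal entries `k₁` on the others. -/
lemma MRel.det_T1 [FiniteDimensional F V] {k0 k1 k2 k3 : F} (hk1 : k1 ≠ 0)
    {v : ℕ → V} (h : MRel q k0 k1 k2 k3 T v) (hg : Gen T (v 0)) {m : ℕ}
    (hn : Module.finrank F V = 2 * m) : LinearMap.det (T 1) = 1 := by
  obtain ⟨b, hb⟩ := h.exists_basis hg hn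
  have key : ∀ i j : Fin (2 * m), ¬ ¬ Even (i : ℕ) → ¬ ¬ Even (j : ℕ) →
      b.repr (T 1 (b j)) i = if j = i then k1 else 0 := by
    intro i j hi hj
    rw [not_not] at hi hj
    obtain ⟨l, hl⟩ := hj
    obtain ⟨l', hl'⟩ := hi
    rw [hb]; simp only [Fin.ext_iff]
    cases l with
    | zero =>
      simp only [add_zero] at hl
      rw [hl, h.t1z]
      simp only [map_add, map_smul, Finsupp.add_apply, Finsupp.smul_apply, smul_eq_mul,
        repr_basis b hb (show 0 < 2 * m by omega), repr_basis b hb (show 1 < 2 * m by omega)]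
      rw [if_neg (show ¬ 1 = (i : ℕ) by omega)]
      simp
    | succ l =>
      rw [show (j : ℕ) = 2 * l + 2 by omega, h.t1e]
      simp only [map_add, map_smul, Finsupp.add_apply, Finsupp.smul_apply, smul_eq_mul,
        repr_basis b hb (show 2 * l + 1 < 2 * m by omega),
        repr_basis b hb (show 2 * l + 2 < 2 * m by omega),
        repr_basis b hb (show 2 * l + 3 < 2 * m by omega)]
      rw [if_neg (show ¬ 2 * l + 1 = (i : ℕ) by omega), if_neg (show ¬ 2 * l + 3 = (i : ℕ) by omega)]
      simp
  rw [det_half b (T 1) (fun i => ¬ Even (i : ℕ)) k1⁻¹ (fun _ => k1)]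
  · simp only [Finset.prod_const, Finset.card_univ, card_not_even]
    have : Fintype.card {i : Fin (2 * m) // ¬ ¬ Even (i : ℕ)} = m := by
      rw [Fintype.card_subtype_compl, card_not_even, Fintype.card_fin]; omega
    rw [this, ← mul_pow, inv_mul_cancel₀ hk1, one_pow]
  · intro j hj
    obtain ⟨l, hl⟩ := Nat.not_even_iff_odd.1 hj
    rw [hb, hl, h.t1o]
  · intro j hj
    rw [key j j hj hj, if_pos rfl]
  · intro i j hi hj hij
    rw [key i j hi hj, if_neg hij.ne]

/-- In even dimension `n`, the determinant of `T₃` reads off the last coordinate of `vₙ`. -/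
lemma MRel.det_T3 {k0 k1 k2 k3 : F} (hk3 : k3 ≠ 0)
    {v : ℕ → V} (h : MRel q k0 k1 k2 k3 T v) {m : ℕ}
    (b : Module.Basis (Fin (2 * (m + 1))) F V) (hb : ∀ i, b i = v i) :
    LinearMap.det (T 3) = 1 + k3 ^ 2 * b.repr (v (2 * m + 2)) (Fin.last (2 * m + 1)) := by
  set x := b.repr (v (2 * m + 2)) (Fin.last (2 * m + 1)) with hx
  have key : ∀ i j : Fin (2 * (m + 1)), ¬ Even (i : ℕ) → ¬ Even (j : ℕ) → j ≤ i →
      b.repr (T 3 (b j)) i = if j = i then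
        k3⁻¹ * (if i = Fin.last (2 * m + 1) then 1 + k3 ^ 2 * x else 1) else 0 := by
    intro i j hi hj hij
    obtain ⟨l, hl⟩ := Nat.not_even_iff_odd.1 hj
    obtain ⟨l', hl'⟩ := Nat.not_even_iff_odd.1 hi
    rw [Fin.le_def] at hij
    rw [hb, hl, h.t3o]
    simp only [map_add, map_smul, Finsupp.add_apply, Finsupp.smul_apply, smul_eq_mul,
        repr_basis b hb (show 2 * l < 2 * (m + 1) by omega),
        repr_basis b hb (show 2 * l + 1 < 2 * (m + 1) by omega), Fin.ext_iff, Fin.val_last, hl]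
    rw [if_neg (show ¬ 2 * l = (i : ℕ) by omega)]
    rcases (show l < m ∨ l = m by omega) with hlm | rfl
    · rw [repr_basis b hb (show 2 * l + 2 < 2 * (m + 1) by omega),
        if_neg (show ¬ 2 * l + 2 = (i : ℕ) by omega)]
      split_ifs <;> first | omega | simp
    · have : i = Fin.last (2 * l + 1) := by ext; simp; omega
      subst this
      rw [← hx]
      simp
      field_simp
  rw [det_half b (T 3) (fun i => Even (i : ℕ)) k3
    (fun i => k3⁻¹ * (if i = Fin.last (2 * m + 1) then 1 + k3 ^ 2 * x else 1))]
  · rw [Finset.prod_mul_distrib, Finset.prod_const, Finset.card_univ, card_even, card_not_even,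
      ← mul_assoc, ← mul_pow, mul_inv_cancel₀ hk3, one_pow, one_mul]
    rw [Finset.prod_eq_single ⟨Fin.last (2 * m + 1), by simp⟩]
    · simp
    · intro i _ hi
      rw [if_neg]
      intro h'
      exact hi (Subtype.ext h')
    · simp
  · intro j hj
    obtain ⟨l, hl⟩ := hj
    rw [hb, hl, ← two_mul, h.t3e]
  · intro j hj
    rw [key j j hj hj le_rfl, if_pos rfl]
  · intro i j hi hj hij
    rw [key i j hi hj hij.le, if_neg hij.ne]

/-- A cyclic representation of even dimension `n > 0` generated by a common eigenvector of `T₀` and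
`T₃` with `det T₃ = 1` forces `k₀² = q⁻ⁿ`: the coordinate along the last basis vector is a left
eigenvector of `T₀`, as the determinant condition says that it vanishes on `vₙ`. -/
lemma MRel.even_dim [FiniteDimensional F V] (hG : Good q c T) (hq : q ≠ 0)
    (hroot : ∀ n : ℕ, 1 ≤ n → q ^ n ≠ 1) {k0 k1 k2 k3 : F}
    (hk0 : k0 ≠ 0) (hk3 : k3 ≠ 0) (c0 : c 0 = k0 + k0⁻¹)
    {v : ℕ → V} (h : MRel q k0 k1 k2 k3 T v) (hg : Gen T (v 0)) {m : ℕ}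
    (hn : Module.finrank F V = 2 * (m + 1)) (hdet : LinearMap.det (T 3) = 1) :
    k0 ^ 2 = (q ^ (2 * (m + 1)))⁻¹ := by
  obtain ⟨b, hb⟩ := h.exists_basis hg hn
  have h3 := h.det_T3 hk3 b hb
  have x0 : b.repr (v (2 * m + 2)) (Fin.last (2 * m + 1)) = 0 := by
    rw [hdet] at h3
    have : k3 ^ 2 * b.repr (v (2 * m + 2)) (Fin.last (2 * m + 1)) = 0 := by
      linear_combination -h3
    exact (mul_eq_zero.1 this).resolve_left (pow_ne_zero 2 hk3)
  set f : V →ₗ[F] F := b.coord (Fin.last (2 * m + 1)) with hf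
  have fv : ∀ i, i < 2 * (m + 1) → f (v i) = if i = 2 * m + 1 then 1 else 0 := by
    intro i hi
    rw [hf, Module.Basis.coord_apply, repr_basis b hb hi, Fin.val_last]
  have fn : f (v (2 * m + 2)) = 0 := x0
  have hext : ∀ y, f (T 0 y) = (k0⁻¹ * (q ^ (2 * m + 2))⁻¹) * f y := by
    intro y
    have : f ∘ₗ T 0 = (k0⁻¹ * (q ^ (2 * m + 2))⁻¹) • f := b.ext fun i => by
      rw [hb]
      simp only [LinearMap.comp_apply, LinearMap.smul_apply, smul_eq_mul]
      obtain ⟨l, hl⟩ := Nat.even_or_odd' (i : ℕ)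
      have := i.2
      rcases hl with hl | hl
      · cases l with
        | zero => rw [hl, mul_zero, h.t0z, map_smul, fv _ (by omega)]; simp
        | succ l =>
          rw [show (i : ℕ) = 2 * l + 2 by omega, h.t0e, map_add, map_smul, map_smul,
            fv _ (by omega), fv _ (by omega), if_neg (by omega), if_neg (by omega)]
          simp
      · rw [hl, h.t0o, map_smul, map_sub, fv (2 * l + 1) (by omega)]
        rcases (show l < m ∨ l = m by omega) with hlm | rfl
        · rw [fv _ (by omega), if_neg (by omega), if_neg (by omega)]; simp
        · rw [fn]; simp
    simpa using congrArg (fun g => g y) this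
  have qn := pow_ne_zero (2 * m + 2) hq
  rcases hG.left_eigen hk0 c0 (x := v (2 * m + 1)) (by rw [fv _ (by omega), if_pos rfl]) hext
    with e | e
  · rw [show 2 * (m + 1) = 2 * m + 2 by ring]
    field_simp
    field_simp at e
    linear_combination -e
  · -- the other root of the quadratic relation would give `qⁿ = 1`
    exfalso
    apply hroot (2 * m + 2) (by omega)
    field_simp at e
    exact e.symm

end Determinants

/-! ### Common eigenvectors in irreducible representations -/

section HighestWeight

variable {V : Type*} [AddCommGroup V] [Module F V] {q : F} {c : ZMod 4 → F}
  {T : ZMod 4 → Module.End F V}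

lemma Irred.gen (h : Irred T) {v : V} (hv : v ≠ 0) : Gen T v := fun W hW hvW =>
  (h.2 W hW).resolve_left fun hb => hv (by simpa [hb] using hvW)

lemma Gen.twist {v : V} (h : Gen T v) (ε : ZMod 4) : Gen (DAHA.twist T ε) v := by
  intro W hW hv
  refine h W (fun i w hw => ?_) hv
  have := hW (i - ε) w hw
  simpa [DAHA.twist] using this

lemma mirror_inv {i : ZMod 4} {w : V} {W : Submodule F V} (hw : w ∈ W)
    (h : mirror c T (-i) w ∈ W) : T i w ∈ W := by
  have e : T i w = c i • w - mirror c T (-i) w := by simp [mirror]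
  rw [e]
  exact W.sub_mem (W.smul_mem _ hw) h

lemma Gen.mirror {v : V} (h : Gen T v) : Gen (DAHA.mirror c T) v :=
  fun W hW hv => h W (fun i w hw => mirror_inv hw (hW (-i) w hw)) hv

lemma Irred.mirror (h : Irred T) : Irred (DAHA.mirror c T) :=
  ⟨h.1, fun W hW => h.2 W fun i w hw => mirror_inv hw (hW (-i) w hw)⟩

lemma Irred.twist (h : Irred T) (ε : ZMod 4) : Irred (DAHA.twist T ε) :=
  ⟨h.1, fun W hW => h.2 W fun i w hw => by simpa [DAHA.twist] using hW (i - ε) w hw⟩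

lemma mirror_eigen {i : ZMod 4} {k : F} (hc : c i = k + k⁻¹) {v : V} :
    mirror c T (-i) v = k⁻¹ • v ↔ T i v = k • v := by
  simp only [mirror, neg_neg, LinearMap.sub_apply, LinearMap.smul_apply, Module.End.one_apply, hc]
  rw [sub_eq_iff_eq_add, add_smul, add_comm, add_right_inj, eq_comm]

lemma Good.det_mirror (hG : Good q c T) (i : ZMod 4) :
    LinearMap.det (T i) * LinearMap.det (DAHA.mirror c T (-i)) = 1 := by
  rw [← map_mul]
  have : T i * DAHA.mirror c T (-i) = 1 := by
    ext v
    simp [DAHA.mirror, hG.quad]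
  rw [this, map_one]

/-- In even dimension, a generating common eigenvector of `T₀` and `T₃` forces
`det T₁ = det T₂ = 1`; the statement on `T₂` is the mirror image of the one on `T₁`. -/
lemma Good.det_eq_one [IsAlgClosed F] [FiniteDimensional F V] (hG : Good q c T) (hq : q ≠ 0)
    {k0 k3 : F} {v : V} (hv : v ≠ 0) (h0 : T 0 v = k0 • v) (h3 : T 3 v = k3 • v)
    (hg : Gen T v) {m : ℕ} (hn : Module.finrank F V = 2 * m) :
    LinearMap.det (T 1) = 1 ∧ LinearMap.det (T 2) = 1 := by
  have key : ∀ (q : F) (c : ZMod 4 → F) (T : ZMod 4 → Module.End F V) (k0 k3 : F), q ≠ 0 →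
      Good q c T → T 0 v = k0 • v → T 3 v = k3 • v → Gen T v → LinearMap.det (T 1) = 1 := by
    intro q c T k0 k3 hq hG h0 h3 hg
    obtain ⟨hk0, c0⟩ := hG.eigen hv h0
    obtain ⟨hk3, c3⟩ := hG.eigen hv h3
    obtain ⟨k1, hk1, c1⟩ := exists_add_inv (c 1)
    obtain ⟨k2, hk2, c2⟩ := exists_add_inv (c 2)
    obtain ⟨u, rfl, hu⟩ := hG.exists_mrel hq hk0 hk1 hk2 hk3 c0 c1 c2 c3 h0 h3
    exact hu.det_T1 hk1 hg hn
  refine ⟨key q c T k0 k3 hq hG h0 h3 hg, ?_⟩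
  have h := key q⁻¹ _ (DAHA.twist (DAHA.mirror c T) 1) k3⁻¹ k0⁻¹ (inv_ne_zero hq)
    ((hG.mirror hq).twist 1) ((mirror_eigen (hG.eigen hv h3).2).2 h3)
    ((mirror_eigen (hG.eigen hv h0).2).2 h0) (hg.mirror.twist 1)
  have e : DAHA.twist (DAHA.mirror c T) 1 1 = DAHA.mirror c T (-2) := rfl
  have := hG.det_mirror 2
  rwa [← e, h, mul_one] at this

/-- In an irreducible representation of even dimension `n` with `det T₃ = 1`, the sequence generated
by a common eigenvector of `T₀` and `T₃` stops at `vₙ`. -/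
lemma MRel.vanish [FiniteDimensional F V] (hG : Good q c T) (hI : Irred T) (hq : q ≠ 0)
    (hroot : ∀ n : ℕ, 1 ≤ n → q ^ n ≠ 1) {k0 k1 k2 k3 : F}
    (hk0 : k0 ≠ 0) (hk1 : k1 ≠ 0) (hk2 : k2 ≠ 0) (hk3 : k3 ≠ 0)
    (c0 : c 0 = k0 + k0⁻¹) (c1 : c 1 = k1 + k1⁻¹) (c2 : c 2 = k2 + k2⁻¹)
    (c3 : c 3 = k3 + k3⁻¹) {v : ℕ → V} (h : MRel q k0 k1 k2 k3 T v) (hv : v 0 ≠ 0) {m : ℕ}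
    (hn : Module.finrank F V = 2 * (m + 1)) (hdet : LinearMap.det (T 3) = 1) :
    k0 ^ 2 = (q ^ (2 * (m + 1)))⁻¹ ∧ v (2 * (m + 1)) = 0 := by
  have e := h.even_dim hG hq hroot hk0 hk3 c0 (hI.gen hv) hn hdet
  have qn := pow_ne_zero (2 * (m + 1)) hq
  refine ⟨e, ?_⟩
  -- otherwise `vₙ` is again a common eigenvector, now with `T₀ vₙ = k₀⁻¹ vₙ`, and `k₀⁻² = q⁻ⁿ`
  by_contra hne
  have h0 : T 0 (v (2 * (m + 1))) = k0⁻¹ • v (2 * (m + 1)) := by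
    have e1 : 1 - k0 ^ 2 * q ^ (2 * (m + 1)) = 0 := by
      rw [e]; field_simp; ring
    have e2 : k0⁻¹ * (q ^ (2 * (m + 1)))⁻¹ = k0 := by
      rw [← e]; field_simp
    have := h.t0e m
    rw [show 2 * m + 2 = 2 * (m + 1) by ring, e1, e2] at this
    rw [this]
    simp
  obtain ⟨u, hu0, hu⟩ := hG.exists_mrel hq (inv_ne_zero hk0) hk1 hk2 hk3
    (by rw [c0, inv_inv, add_comm]) c1 c2 c3 h0 (h.t3e (m + 1))
  have e' := hu.even_dim hG hq hroot (inv_ne_zero hk0) hk3 (by rw [c0, inv_inv, add_comm])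
    (hI.gen (hu0 ▸ hne)) hn hdet
  rw [inv_pow, e, inv_inv] at e'
  apply hroot (2 * (m + 1) + 2 * (m + 1)) (by omega)
  rw [pow_add]
  nth_rewrite 1 [e']
  exact inv_mul_cancel₀ qn

/-- A common eigenvector of `T₀` and `T₃` produces common eigenvectors of `T₀` and `T₁`, with
an arbitrary choice of the eigenvalue of `T₁`. -/
lemma Good.flip [IsAlgClosed F] [FiniteDimensional F V] (hG : Good q c T) (hI : Irred T)
    (hq : q ≠ 0) (hroot : ∀ n : ℕ, 1 ≤ n → q ^ n ≠ 1) {k0 k3 l : F} {v : V} (hv : v ≠ 0)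
    (h0 : T 0 v = k0 • v) (h3 : T 3 v = k3 • v) {m : ℕ}
    (hn : Module.finrank F V = 2 * (m + 1)) (hdet : LinearMap.det (T 3) = 1)
    (hl : l ≠ 0) (cl : c 1 = l + l⁻¹) :
    ∃ w : V, w ≠ 0 ∧ T 0 w = k0 • w ∧ T 1 w = l • w := by
  obtain ⟨hk0, c0⟩ := hG.eigen hv h0
  obtain ⟨hk3, c3⟩ := hG.eigen hv h3
  obtain ⟨k2, hk2, c2⟩ := exists_add_inv (c 2)
  have c1 : c 1 = l⁻¹ + l⁻¹⁻¹ := by rw [cl, inv_inv, add_comm]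
  obtain ⟨u, hu0, hu⟩ := hG.exists_mrel hq hk0 (inv_ne_zero hl) hk2 hk3 c0 c1 c2 c3 h0 h3
  rw [← hu0] at hv
  obtain ⟨e, hz⟩ := hu.vanish hG hI hq hroot hk0 (inv_ne_zero hl) hk2 hk3 c0 c1 c2 c3 hv hn hdet
  obtain ⟨b, hb⟩ := hu.exists_basis (hI.gen hv) hn
  refine ⟨u (2 * m + 1), ?_, ?_, ?_⟩
  · have := hb ⟨2 * m + 1, by omega⟩
    simp only at this
    rw [← this]
    exact b.ne_zero _
  · rw [hu.t0o, show 2 * m + 2 = 2 * (m + 1) by ring, hz, ← e, sub_zero]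
    congr 1
    field_simp
  · rw [hu.t1o, inv_inv]

/-- The converse of `Good.flip`, obtained by applying it to the mirror image. -/
lemma Good.unflip [IsAlgClosed F] [FiniteDimensional F V] (hG : Good q c T) (hI : Irred T)
    (hq : q ≠ 0) (hroot : ∀ n : ℕ, 1 ≤ n → q ^ n ≠ 1) {k0 k1 l : F} {w : V} (hw : w ≠ 0)
    (h0 : T 0 w = k0 • w) (h1 : T 1 w = k1 • w) {m : ℕ}
    (hn : Module.finrank F V = 2 * (m + 1)) (hdet : LinearMap.det (T 1) = 1)
    (hl : l ≠ 0) (cl : c 3 = l + l⁻¹) :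
    ∃ v : V, v ≠ 0 ∧ T 0 v = k0 • v ∧ T 3 v = l • v := by
  have hroot' : ∀ n : ℕ, 1 ≤ n → q⁻¹ ^ n ≠ 1 := by
    intro n hn h
    rw [inv_pow, inv_eq_one] at h
    exact hroot n hn h
  have hd : LinearMap.det (DAHA.mirror c T 3) = 1 := by
    have := hG.det_mirror 1
    rwa [hdet, one_mul] at this
  obtain ⟨v, hv, e0, e1⟩ := (hG.mirror hq).flip hI.mirror (inv_ne_zero hq) hroot' hw
    ((mirror_eigen (i := 0) (hG.eigen hw h0).2).2 h0)
    ((mirror_eigen (i := 1) (hG.eigen hw h1).2).2 h1) hn hd (inv_ne_zero hl)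
    (show c 3 = l⁻¹ + l⁻¹⁻¹ by rw [cl, inv_inv, add_comm])
  exact ⟨v, hv, (mirror_eigen (i := 0) (hG.eigen hw h0).2).1 e0,
    (mirror_eigen (i := 3) cl).1 e1⟩

end HighestWeight

/-! ### Existence of a common eigenvector -/

section Existence

variable {V : Type*} [AddCommGroup V] [Module F V] {q : F} {c : ZMod 4 → F}
  {T : ZMod 4 → Module.End F V}

/-- Existence of a common eigenvector of `T₀` and `T₃`. -/
def HW (T : ZMod 4 → Module.End F V) : Prop :=
  ∃ v : V, v ≠ 0 ∧ ∃ k0 k3 : F, T 0 v = k0 • v ∧ T 3 v = k3 • v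

/-- Unless `T₀` and `T₃` have a common eigenvector, the eigenvalues of `T₃ T₀` are closed under
inversion: if `T₃ T₀ v = θ v`, then `v` and `T₀ v` span a subspace stable under `T₃ T₀`, on which
`T₃ T₀` has determinant `1`. -/
lemma Good.eigenvalue_inv (h : Good q c T) (hT : ¬ HW T) {θ : F}
    (hθ : ∃ v : V, v ≠ 0 ∧ T 3 (T 0 v) = θ • v) : ∃ v : V, v ≠ 0 ∧ T 3 (T 0 v) = θ⁻¹ • v := by
  obtain ⟨v, hv, hθ⟩ := hθ
  have inj : ∀ i x, T i x = 0 → x = 0 := by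
    intro i x hx
    have := h.quad i x
    rw [hx, map_zero, smul_zero, zero_sub] at this
    exact neg_eq_zero.1 this.symm
  have hθ0 : θ ≠ 0 := by
    rintro rfl
    rw [zero_smul] at hθ
    exact hv (inj 0 _ (inj 3 _ hθ))
  by_cases hd : θ = θ⁻¹
  · exact ⟨v, hv, hd ▸ hθ⟩
  have hd' : θ - θ⁻¹ ≠ 0 := sub_ne_zero.2 hd
  have t3 : T 3 v = c 3 • v - θ⁻¹ • T 0 v := by
    have := h.quad 3 (T 0 v)
    rw [hθ, map_smul] at this
    have e : T 3 v = θ⁻¹ • (θ • T 3 v) := by rw [smul_smul, inv_mul_cancel₀ hθ0, one_smul]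
    rw [e, this]
    match_scalars <;> field_simp
  obtain ⟨α, hα⟩ : ∃ α, α * (θ - θ⁻¹) = c 0 * θ - c 3 :=
    ⟨(c 0 * θ - c 3) / (θ - θ⁻¹), div_mul_cancel₀ _ hd'⟩
  by_cases hu : T 0 v - α • v = 0
  · have h0 : T 0 v = α • v := sub_eq_zero.1 hu
    exact absurd ⟨v, hv, α, c 3 - θ⁻¹ * α, h0, by rw [t3, h0]; module⟩ hT
  · refine ⟨_, hu, ?_⟩
    rw [map_sub, map_sub, map_smul, map_smul, h.quad, map_sub, map_smul, hθ, t3]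
    match_scalars
    · linear_combination -hα
    · ring

/-- `T₀` and `T₃`, or `T₁` and `T₂`, have a common eigenvector: otherwise multiplication by `q²`
would preserve the eigenvalues of `T₃ T₀`, of which there are finitely many. -/
lemma Good.exists_hw [IsAlgClosed F] [FiniteDimensional F V] [Nontrivial V] (h : Good q c T)
    (hq : q ≠ 0) (hroot : ∀ n : ℕ, 1 ≤ n → q ^ n ≠ 1) : HW T ∨ HW (DAHA.twist T 2) := by
  by_contra hT
  rw [not_or] at hT
  obtain ⟨θ, hθ⟩ := Module.End.exists_eigenvalue (T 3 * T 0)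
  have inj : ∀ i x, T i x = 0 → x = 0 := by
    intro i x hx
    have := h.quad i x
    rw [hx, map_zero, smul_zero, zero_sub] at this
    exact neg_eq_zero.1 this.symm
  -- `T₁ T₂ = q⁻¹ (T₃ T₀)⁻¹` relates the eigenvalues of the two products
  have swap : ∀ (c : ZMod 4 → F) (T : ZMod 4 → Module.End F V), Good q c T → ∀ θ : F, θ ≠ 0 →
      (∃ v : V, v ≠ 0 ∧ T 3 (T 0 v) = θ • v) →
      ∃ v : V, v ≠ 0 ∧ T 1 (T 2 v) = (q⁻¹ * θ⁻¹) • v := by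
    rintro c T h θ hθ ⟨v, hv, e⟩
    refine ⟨v, hv, ?_⟩
    have := h.prod' v
    rw [e, map_smul, map_smul] at this
    rw [mul_comm, mul_smul, ← this, smul_smul, inv_mul_cancel₀ hθ, one_smul]
  have step : ∀ θ : F, θ ≠ 0 → (∃ v : V, v ≠ 0 ∧ T 3 (T 0 v) = θ • v) →
      ∃ v : V, v ≠ 0 ∧ T 3 (T 0 v) = (θ * q ^ 2) • v := by
    intro θ hθ hv
    have h1 := swap c T h θ hθ hv
    have h2 := (h.twist 2).eigenvalue_inv hT.2 h1
    have h3 := swap _ _ (h.twist 2) _ (by positivity) h2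
    have h4 := h.eigenvalue_inv hT.1 h3
    convert h4 using 5
    field_simp
  have hθ0 : ∃ v : V, v ≠ 0 ∧ T 3 (T 0 v) = θ • v := by
    obtain ⟨v, hv⟩ := hθ.exists_hasEigenvector
    exact ⟨v, hv.2, hv.apply_eq_smul⟩
  have hne : θ ≠ 0 := by
    rintro rfl
    obtain ⟨v, hv, e⟩ := hθ0
    rw [zero_smul] at e
    exact hv (inj 0 _ (inj 3 _ e))
  have all : ∀ m : ℕ, ∃ v : V, v ≠ 0 ∧ T 3 (T 0 v) = (θ * (q ^ 2) ^ m) • v := by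
    intro m
    induction m with
    | zero => simpa using hθ0
    | succ m ih =>
      have := step _ (mul_ne_zero hne (pow_ne_zero _ (pow_ne_zero _ hq))) ih
      rwa [mul_assoc, ← pow_succ] at this
  have hinj : Function.Injective fun m : ℕ => θ * (q ^ 2) ^ m := by
    have key : ∀ a b : ℕ, a < b → θ * (q ^ 2) ^ a ≠ θ * (q ^ 2) ^ b := by
      intro a b hab e
      have e := mul_left_cancel₀ hne e
      obtain ⟨l, rfl⟩ := Nat.exists_eq_add_of_lt hab
      rw [add_assoc, pow_add] at e
      have e2 := mul_left_cancel₀ (pow_ne_zero a (pow_ne_zero 2 hq)) ((mul_one _).trans e)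
      rw [← pow_mul] at e2
      exact hroot _ (by omega) e2.symm
    intro a b e
    rcases lt_trichotomy a b with hab | hab | hab
    · exact absurd e (key a b hab)
    · exact hab
    · exact absurd e.symm (key b a hab)
  refine Set.infinite_of_injective_forall_mem hinj (s := {μ | (T 3 * T 0).HasEigenvalue μ}) ?_
    (Module.End.finite_hasEigenvalue _)
  intro m
  obtain ⟨v, hv, e⟩ := all m
  exact Module.End.hasEigenvalue_of_hasEigenvector
    (Module.End.hasEigenvector_iff.2 ⟨Module.End.mem_eigenspace_iff.2 e, hv⟩)

/-- In even dimension, some twist of an irreducible representation has a common eigenvector of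
`T₀` and `T₃` and satisfies `det T₃ = 1`. -/
lemma Good.exists_twist [IsAlgClosed F] [FiniteDimensional F V] (h : Good q c T) (hI : Irred T)
    (hq : q ≠ 0) (hroot : ∀ n : ℕ, 1 ≤ n → q ^ n ≠ 1) {m : ℕ}
    (hn : Module.finrank F V = 2 * m) :
    ∃ ε : ZMod 4, HW (DAHA.twist T ε) ∧ LinearMap.det (DAHA.twist T ε 3) = 1 := by
  obtain ⟨v, hv⟩ := hI.1
  have : Nontrivial V := ⟨v, 0, hv⟩
  have hdet : ∀ ε : ZMod 4, HW (DAHA.twist T ε) →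
      LinearMap.det (T (1 + ε)) = 1 ∧ LinearMap.det (T (2 + ε)) = 1 := by
    rintro ε ⟨v, hv, k0, k3, h0, h3⟩
    exact (h.twist ε).det_eq_one hq hv h0 h3 ((hI.twist ε).gen hv) hn
  have e0 : DAHA.twist T 0 = T := by funext i; simp [DAHA.twist]
  have A : HW (DAHA.twist T 0) ∨ HW (DAHA.twist T 2) := by
    rw [e0]; exact h.exists_hw hq hroot
  have B : HW (DAHA.twist T 1) ∨ HW (DAHA.twist T 3) := (h.twist 1).exists_hw hq hroot
  rcases A with A | A <;> rcases B with B | B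
  · exact ⟨0, A, (hdet _ B).2⟩
  · exact ⟨3, B, (hdet _ A).2⟩
  · exact ⟨1, B, (hdet _ A).2⟩
  · exact ⟨2, A, (hdet _ B).2⟩

end Existence

/-! ### The standard module `E(k₀,k₁,k₂,k₃)` -/

section Standard

variable {q k0 k1 k2 k3 : F} {d : ℕ} {T : ZMod 4 → Module.End F (Fin (d + 1) → F)}

lemma e_of_lt {i : ℕ} (h : d < i) : e F d i = 0 := dif_neg (by omega)

lemma e_of_le {i : ℕ} (h : i < d + 1) : e F d i = Pi.basisFun F (Fin (d + 1)) ⟨i, h⟩ := by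
  rw [e, dif_pos h, Pi.basisFun_apply]

/-- The defining relations of `E(k₀,k₁,k₂,k₃)` are those of `M(k₀,k₁,k₂,k₃)` with `vᵢ = 0` for
`i > d`; the special cases at the right end are accounted for by `k₀² q^(d+1) = 1`. -/
lemma IsE.mrel (h : IsE q k0 k1 k2 k3 d T) (hq : q ≠ 0) (hodd : Odd d) (hk0 : k0 ≠ 0)
    (hk : k0 ^ 2 = (q ^ (d + 1))⁻¹) : MRel q k0 k1 k2 k3 T (e F d) := by
  obtain ⟨t0e, t0o, t0z, t0d, t1e, t1o, t1z, t2e, t2o, t3e, t3o, t3d⟩ := h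
  obtain ⟨l, rfl⟩ := hodd
  have hq' := pow_ne_zero (2 * l + 2) hq
  have hk' : 1 - k0 ^ 2 * q ^ (2 * l + 2) = 0 := by rw [hk]; field_simp; ring
  have hk'' : k0⁻¹ * (q ^ (2 * l + 2))⁻¹ = k0 := by
    rw [show 2 * l + 2 = 2 * l + 1 + 1 by ring, ← hk]; field_simp
  refine ⟨t0z, ?_, ?_, t1z, ?_, ?_, ?_, ?_, ?_, ?_⟩
  · intro m
    rcases lt_trichotomy m l with hm | rfl | hm
    · exact t0e (2 * m + 2) ⟨m + 1, by ring⟩ (by omega) (by omega)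
    · rw [hk', e_of_lt (show 2 * m + 1 < 2 * m + 2 by omega)]; simp
    · rw [e_of_lt (show 2 * l + 1 < 2 * m + 2 by omega),
        e_of_lt (show 2 * l + 1 < 2 * m + 1 by omega)]; simp
  · intro m
    rcases lt_trichotomy m l with hm | rfl | hm
    · exact t0o (2 * m + 1) ⟨m, rfl⟩ (by omega)
    · rw [hk'', e_of_lt (show 2 * m + 1 < 2 * m + 2 by omega), t0d, sub_zero]
    · rw [e_of_lt (show 2 * l + 1 < 2 * m + 2 by omega),
        e_of_lt (show 2 * l + 1 < 2 * m + 1 by omega)]; simp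
  · intro m
    rcases lt_trichotomy m l with hm | rfl | hm
    · exact t1e (2 * m + 2) ⟨m + 1, by ring⟩ (by omega) (by omega)
    · rw [hk', e_of_lt (show 2 * m + 1 < 2 * m + 2 by omega),
        e_of_lt (show 2 * m + 1 < 2 * m + 3 by omega)]; simp
    · rw [e_of_lt (show 2 * l + 1 < 2 * m + 2 by omega),
        e_of_lt (show 2 * l + 1 < 2 * m + 3 by omega),
        e_of_lt (show 2 * l + 1 < 2 * m + 1 by omega)]; simp
  · intro m
    rcases le_or_gt m l with hm | hm
    · exact t1o (2 * m + 1) ⟨m, rfl⟩ (by omega)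
    · rw [e_of_lt (show 2 * l + 1 < 2 * m + 1 by omega)]; simp
  · intro m
    rcases le_or_gt m l with hm | hm
    · exact t2e (2 * m) ⟨m, two_mul m⟩ (by omega)
    · rw [e_of_lt (show 2 * l + 1 < 2 * m by omega),
        e_of_lt (show 2 * l + 1 < 2 * m + 1 by omega)]; simp
  · intro m
    rcases le_or_gt m l with hm | hm
    · exact t2o (2 * m + 1) ⟨m, rfl⟩ (by omega)
    · rw [e_of_lt (show 2 * l + 1 < 2 * m by omega),
        e_of_lt (show 2 * l + 1 < 2 * m + 1 by omega)]; simp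
  · intro m
    rcases le_or_gt m l with hm | hm
    · exact t3e (2 * m) ⟨m, two_mul m⟩ (by omega)
    · rw [e_of_lt (show 2 * l + 1 < 2 * m by omega)]; simp
  · intro m
    rcases lt_trichotomy m l with hm | rfl | hm
    · exact t3o (2 * m + 1) ⟨m, rfl⟩ (by omega)
    · rw [e_of_lt (show 2 * m + 1 < 2 * m + 2 by omega), smul_zero, add_zero]
      exact t3d
    · rw [e_of_lt (show 2 * l + 1 < 2 * m by omega),
        e_of_lt (show 2 * l + 1 < 2 * m + 1 by omega),
        e_of_lt (show 2 * l + 1 < 2 * m + 2 by omega)]; simp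

/-- Recognition of `E(k₀,k₁,k₂,k₃)`: it is enough that a linear isomorphism carries the operators
and the standard basis to a sequence that satisfies the relations of `M(k₀,k₁,k₂,k₃)` and stops at
`v_{d+1}`. -/
lemma MRel.isE {V : Type*} [AddCommGroup V] [Module F V] {T' : ZMod 4 → Module.End F V}
    {v : ℕ → V} (h : MRel q k0 k1 k2 k3 T' v) (hodd : Odd d) (hk0 : k0 ≠ 0)
    (hk : k0 ^ 2 = (q ^ (d + 1))⁻¹) (hv : v (d + 1) = 0) (S : (Fin (d + 1) → F) ≃ₗ[F] V)
    (hS : ∀ i x, S (T i x) = T' i (S x)) (hSe : ∀ i, i ≤ d → S (e F d i) = v i) :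
    IsE q k0 k1 k2 k3 d T := by
  have hSe' : ∀ i, i ≤ d + 1 → S (e F d i) = v i := by
    intro i hi
    rcases hi.lt_or_eq with hi | rfl
    · exact hSe i (by omega)
    · rw [e_of_lt (by omega), map_zero, hv]
  obtain ⟨l, rfl⟩ := hodd
  have hk'' : k0⁻¹ * (q ^ (2 * l + 2))⁻¹ = k0 := by
    rw [show 2 * l + 2 = 2 * l + 1 + 1 by ring, ← hk]; field_simp
  refine ⟨?_, ?_, ?_, ?_, ?_, ?_, ?_, ?_, ?_, ?_, ?_, ?_⟩
  · rintro i ⟨m, rfl⟩ h2 hi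
    obtain ⟨m, rfl⟩ : ∃ m', m = m' + 1 := ⟨m - 1, by omega⟩
    apply S.injective
    rw [show m + 1 + (m + 1) = 2 * m + 2 by ring, show 2 * m + 2 - 1 = 2 * m + 1 by omega, hS,
      map_add, map_smul, map_smul, hSe' _ (by omega), hSe' _ (by omega), h.t0e]
  · rintro i ⟨m, rfl⟩ hi
    apply S.injective
    rw [hS, map_smul, map_sub, hSe' _ (by omega), hSe' _ (by omega), h.t0o]
  · apply S.injective
    rw [hS, map_smul, hSe' _ (by omega), h.t0z]
  · apply S.injective
    rw [hS, map_smul, hSe' _ (by omega), h.t0o, hk'']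
    rw [show 2 * l + 2 = 2 * l + 1 + 1 by ring, hv, sub_zero]
  · rintro i ⟨m, rfl⟩ h2 hi
    obtain ⟨m, rfl⟩ : ∃ m', m = m' + 1 := ⟨m - 1, by omega⟩
    apply S.injective
    rw [show m + 1 + (m + 1) = 2 * m + 2 by ring, show 2 * m + 2 - 1 = 2 * m + 1 by omega, hS,
      map_add, map_add, map_smul, map_smul, map_smul, hSe' _ (by omega), hSe' _ (by omega),
      hSe' _ (by omega), h.t1e]
  · rintro i ⟨m, rfl⟩ hi
    apply S.injective
    rw [hS, map_smul, hSe' _ (by omega), h.t1o]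
  · apply S.injective
    rw [hS, map_add, map_smul, map_smul, hSe' _ (by omega), hSe' _ (by omega), h.t1z]
  · rintro i ⟨m, rfl⟩ hi
    apply S.injective
    rw [← two_mul, hS, map_smul, map_sub, hSe' _ (by omega), hSe' _ (by omega), h.t2e]
  · rintro i ⟨m, rfl⟩ hi
    apply S.injective
    rw [hS, map_add, map_smul, map_smul, hSe' _ (by omega), hSe' _ (by omega), h.t2o,
      Nat.add_sub_cancel]
  · rintro i ⟨m, rfl⟩ hi
    apply S.injective
    rw [← two_mul, hS, map_smul, hSe' _ (by omega), h.t3e]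
  · rintro i ⟨m, rfl⟩ hi
    apply S.injective
    rw [hS, map_add, map_add, map_smul, map_smul, map_smul, hSe' _ (by omega), hSe' _ (by omega),
      hSe' _ (by omega), h.t3o, Nat.add_sub_cancel]
  · apply S.injective
    rw [hS, map_add, map_smul, map_smul, hSe' _ (by omega), hSe' _ (by omega), h.t3o,
      Nat.add_sub_cancel, show 2 * l + 2 = 2 * l + 1 + 1 by ring, hv, smul_zero, add_zero]

/-- The central character `cᵢ = kᵢ + kᵢ⁻¹`. -/
def chr (k0 k1 k2 k3 : F) (i : ZMod 4) : F :=
  if i = 0 then k0 + k0⁻¹ else if i = 1 then k1 + k1⁻¹ else if i = 2 then k2 + k2⁻¹ else k3 + k3⁻¹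

lemma span_e : Submodule.span F (Set.range (e F d)) = ⊤ := by
  rw [eq_top_iff, ← (Pi.basisFun F (Fin (d + 1))).span_eq]
  apply Submodule.span_mono
  rintro _ ⟨i, rfl⟩
  exact ⟨i, e_of_le i.2⟩

lemma IsE.good (h : IsE q k0 k1 k2 k3 d T) (hq : q ≠ 0) (hodd : Odd d)
    (hk : EPmem q d k0 k1 k2 k3) : Good q (chr k0 k1 k2 k3) T := by
  obtain ⟨hk0, hk1, hk2, hk3, hk, -⟩ := hk
  exact (h.mrel hq hodd hk0 hk).good hq hk0 hk1 hk2 hk3 rfl rfl rfl rfl span_e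

lemma Good.isRep {V : Type*} [AddCommGroup V] [Module F V] {c : ZMod 4 → F}
    {T : ZMod 4 → Module.End F V} (h : Good q c T) : IsRep q T := by
  have r : ∀ i, T i * (c i • 1 - T i) = 1 := by
    intro i; ext v; simp [h.quad]
  have l : ∀ i, (c i • 1 - T i) * T i = 1 := by
    intro i; ext v; simp [h.quad]
  have u : ∀ i, IsUnit (T i) := fun i => ⟨⟨T i, c i • 1 - T i, r i, l i⟩, rfl⟩
  refine ⟨u, fun i j => ?_, ?_⟩
  · have : Ring.inverse (T i) = c i • 1 - T i := by
      have := Ring.inverse_mul_cancel_left (T i) (c i • 1 - T i) (u i)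
      rwa [r, mul_one] at this
    rw [this, add_sub_cancel]
    exact (Commute.one_left _).smul_left _
  · ext v
    simpa using h.prod v

end Standard

/-! ### Irreducibility of `E(k₀,k₁,k₂,k₃)` -/

section Irreducibility

lemma pow_inj {q : F} (hq : q ≠ 0) (hroot : ∀ n : ℕ, 1 ≤ n → q ^ n ≠ 1) {a b : ℕ}
    (h : q ^ a = q ^ b) : a = b := by
  have key : ∀ a b : ℕ, a < b → q ^ a ≠ q ^ b := by
    intro a b hab e
    obtain ⟨l, rfl⟩ := Nat.exists_eq_add_of_lt hab
    rw [add_assoc, pow_add] at e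
    exact hroot _ (by omega) (mul_left_cancel₀ (pow_ne_zero a hq) ((mul_one _).trans e)).symm
  rcases lt_trichotomy a b with hab | hab | hab
  · exact absurd h (key a b hab)
  · exact hab
  · exact absurd h.symm (key b a hab)

variable {q k0 k1 k2 k3 : F} {d : ℕ} {T : ZMod 4 → Module.End F (Fin (d + 1) → F)}

lemma MRel.gen_e (h : MRel q k0 k1 k2 k3 T (e F d)) (hq : q ≠ 0) (hk0 : k0 ≠ 0) (hk1 : k1 ≠ 0) :
    Gen T (e F d 0) := by
  intro W hW h0
  rw [eq_top_iff, ← span_e, Submodule.span_le]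
  rintro _ ⟨i, rfl⟩
  exact h.mem hq hk0 hk1 hW h0 i

/-- The last basis vector of `E(k₀,k₁,k₂,k₃)` generates: the coefficients along which `T₀` and `T₂`
lower the index do not vanish. -/
lemma IsE.gen_last (h : IsE q k0 k1 k2 k3 d T) (hq : q ≠ 0)
    (hroot : ∀ n : ℕ, 1 ≤ n → q ^ n ≠ 1) (hodd : Odd d) (hk : EPmem q d k0 k1 k2 k3) :
    Gen T (e F d d) := by
  obtain ⟨hk0, hk1, hk2, hk3, hk, hE⟩ := hk
  have hM := h.mrel hq hodd hk0 hk
  intro W hW hd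
  have even_mem : ∀ m, 2 * m + 1 ≤ d → e F d (2 * m + 1) ∈ W → e F d (2 * m) ∈ W := by
    intro m hm hmem
    have h2 := hW 2 _ hmem
    rw [hM.t2o] at h2
    have h2' := (W.add_mem_iff_left (W.smul_mem _ hmem)).1 h2
    obtain ⟨e1, -, e3, -⟩ := hE (2 * m + 1) ⟨m, rfl⟩ hm
    have qn := pow_ne_zero (2 * m + 1) hq
    refine (W.smul_mem_iff (mul_ne_zero (mul_ne_zero (by positivity) ?_) ?_)).1 h2'
    · intro h'
      apply e3
      field_simp
      linear_combination h'
    · intro h'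
      apply e1
      field_simp at h' ⊢
      linear_combination h'
  obtain ⟨l, rfl⟩ := hodd
  have odd_mem : ∀ t m, m + t = l → e F (2 * l + 1) (2 * m + 1) ∈ W := by
    intro t
    induction t with
    | zero => rintro m rfl; exact hd
    | succ t ih =>
      intro m hm
      have h1 := ih (m + 1) (by omega)
      have h2 := even_mem (m + 1) (by omega) h1
      have h3 := hW 0 _ h2
      rw [show 2 * (m + 1) = 2 * m + 2 by ring] at h2 h3
      rw [hM.t0e] at h3
      refine (W.smul_mem_iff (mul_ne_zero (mul_ne_zero (by positivity) ?_) ?_)).1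
        ((W.add_mem_iff_left (W.smul_mem _ h2)).1 h3)
      · intro h'
        exact hroot _ (by omega) (sub_eq_zero.1 h').symm
      · intro h'
        rw [hk] at h'
        have qn := pow_ne_zero (2 * l + 1 + 1) hq
        field_simp at h'
        rw [mul_zero] at h'
        have := pow_inj hq hroot (sub_eq_zero.1 h')
        omega
  exact hM.gen_e hq hk0 hk1 W hW (even_mem 0 (by omega) (odd_mem l 0 (by omega)))

lemma Gen.map {V V' : Type*} [AddCommGroup V] [Module F V] [AddCommGroup V'] [Module F V']
    {T : ZMod 4 → Module.End F V} {T' : ZMod 4 → Module.End F V'} {v : V} (h : Gen T v)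
    (S : V →ₗ[F] V') (hS : ∀ i v, S (T i v) = T' i (S v)) (hs : Function.Surjective S) :
    Gen T' (S v) := by
  intro W hW hv
  have := h (W.comap S) (fun i w hw => by
    rw [Submodule.mem_comap, hS]; exact hW i _ hw) hv
  rw [eq_top_iff]
  intro y _
  obtain ⟨x, rfl⟩ := hs y
  have : x ∈ W.comap S := this ▸ Submodule.mem_top
  exact this

/-- The representation `E(k₀,k₁,k₂,k₃)` is irreducible: a quotient by a proper nonzero
invariant subspace is generated by the image of `v₀`, and the constraints on its dimension are
incompatible with the parameters. -/
lemma IsE.irred [IsAlgClosed F] (h : IsE q k0 k1 k2 k3 d T) (hq : q ≠ 0)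
    (hroot : ∀ n : ℕ, 1 ≤ n → q ^ n ≠ 1) (hodd : Odd d) (hk : EPmem q d k0 k1 k2 k3) :
    Irred T := by
  have hG := h.good hq hodd hk
  have hlast := h.gen_last hq hroot hodd hk
  obtain ⟨hk0, hk1, hk2, hk3, hk, hE⟩ := hk
  have hM := h.mrel hq hodd hk0 hk
  have hgen := hM.gen_e hq hk0 hk1
  obtain ⟨-, -, -, t0d, -, t1o, -⟩ := h
  refine ⟨⟨1, one_ne_zero⟩, fun W hW => ?_⟩
  by_contra hW'
  rw [not_or] at hW'
  set Q := (Fin (d + 1) → F) ⧸ W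
  set TQ : ZMod 4 → Module.End F Q := fun i => W.mapQ W (T i) (hW i) with hTQ
  have hS : ∀ i v, W.mkQ (T i v) = TQ i (W.mkQ v) := fun i v => rfl
  have hsurj := W.mkQ_surjective
  have hGQ : Good q (chr k0 k1 k2 k3) TQ := by
    constructor
    · intro i x
      obtain ⟨v, rfl⟩ := hsurj x
      rw [← hS, ← hS, hG.quad, map_sub, map_smul]
    · intro x
      obtain ⟨v, rfl⟩ := hsurj x
      rw [← hS, ← hS, ← hS, ← hS, hG.prod, map_smul]
  have hMQ := hM.map W.mkQ hS
  have hg0 := hgen.map W.mkQ hS hsurj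
  have hgd := hlast.map W.mkQ hS hsurj
  have hne : ∀ v, Gen T v → W.mkQ v ≠ 0 := by
    intro v hv h0
    exact hW'.2 (hv W hW (by simpa using h0))
  have hdim : Module.finrank F Q + Module.finrank F W = d + 1 := by
    rw [W.finrank_quotient_add_finrank, Module.finrank_fin_fun]
  obtain ⟨m, hm | hm⟩ := Nat.even_or_odd' (Module.finrank F Q)
  · cases m with
    | zero =>
      have : Subsingleton Q := Module.finrank_zero_iff.1 hm
      exact hne _ hgen (Subsingleton.elim _ _)
    | succ m =>
      have hdet : LinearMap.det (twist TQ 1 2) = 1 := by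
        refine ((hGQ.twist 1).det_eq_one hq (hne _ hlast) (k0 := k1⁻¹) (k3 := k0) ?_ ?_
          (hgd.twist 1) hm).2
        · change TQ 1 (W.mkQ _) = _
          rw [← hS, t1o d hodd le_rfl, map_smul]
        · change TQ 0 (W.mkQ _) = _
          rw [← hS, t0d, map_smul]
      have e := hMQ.even_dim hGQ hq hroot hk0 hk3 rfl hg0 hm hdet
      rw [hk, inv_inj] at e
      have e := pow_inj hq hroot e
      have : Module.finrank F W = 0 := by omega
      exact hW'.1 (Submodule.finrank_eq_zero.1 this)
  · have hle : 2 * m + 1 ≤ d := by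
      obtain ⟨l, rfl⟩ := hodd
      omega
    obtain ⟨e1, e2, e3, -⟩ := hE (2 * m + 1) ⟨m, rfl⟩ hle
    rcases hMQ.odd_dim hGQ hq hk0 hk1 hk2 hk3 rfl rfl hg0 hm with e | e | e | e
    · exact e1 e
    · exact e2 e
    · exact e3 e
    · -- by `k₀² = q^(-d-1)` this is the last inequality at index `d + 1 - n`
      obtain ⟨-, -, -, e4⟩ := hE (d - 2 * m) (by
        obtain ⟨l, rfl⟩ := hodd
        exact ⟨l - m, by omega⟩) (by omega)
      apply e4
      have e5 : q ^ (d + 1) = q ^ (d - 2 * m) * q ^ (2 * m + 1) := by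
        rw [← pow_add]; congr 1; omega
      have q1 := pow_ne_zero (d - 2 * m) hq
      have q2 := pow_ne_zero (2 * m + 1) hq
      rw [e5] at hk
      have e6 : k0 * k1 * k2 * k3⁻¹ = k0 ^ 2 * (k0 * k1⁻¹ * k2⁻¹ * k3)⁻¹ := by
        field_simp
      rw [e6, e, hk]
      field_simp

end Irreducibility

/-! ### Recognition and determinants of `E(k₀,k₁,k₂,k₃)` -/

section Classification

variable {V : Type*} [AddCommGroup V] [Module F V] {q : F} {c : ZMod 4 → F}
  {T : ZMod 4 → Module.End F V}

/-- In an irreducible representation of even dimension `n` in which the sequence stops at `vₙ`, the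
coefficients along which `T₂` and `T₃` lower odd indices do not vanish: otherwise the later basis
vectors span an invariant subspace. -/
lemma MRel.lowering_ne [FiniteDimensional F V] {k0 k1 k2 k3 : F} {v : ℕ → V}
    (h : MRel q k0 k1 k2 k3 T v) (hI : Irred T) (hv : v 0 ≠ 0) {n : ℕ}
    (hn : Module.finrank F V = 2 * n) (hz : v (2 * n) = 0) {l : ℕ} (hl : l < n) :
    (k0 * k1 * k3 * q ^ (2 * l + 1) - k2) * (k0 * k1 * k3 * q ^ (2 * l + 1) - k2⁻¹) ≠ 0 := by
  intro hφ
  obtain ⟨b, hb⟩ := h.exists_basis (hI.gen hv) hn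
  set W := Submodule.span F (v '' {j | 2 * l + 1 ≤ j ∧ j < 2 * n}) with hW
  have mem : ∀ j, 2 * l + 1 ≤ j → j ≤ 2 * n → v j ∈ W := by
    intro j h1 h2
    rcases h2.lt_or_eq with h2 | rfl
    · exact Submodule.subset_span ⟨j, ⟨h1, h2⟩, rfl⟩
    · rw [hz]; exact W.zero_mem
  have inv : ∀ i, ∀ w ∈ W, T i w ∈ W := by
    intro i w hw
    have : W ≤ W.comap (T i) := by
      rw [hW, Submodule.span_le]
      rintro _ ⟨j, ⟨h1, h2⟩, rfl⟩
      change T i (v j) ∈ W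
      obtain ⟨m, rfl | rfl⟩ := Nat.even_or_odd' j
      · obtain ⟨m, rfl⟩ : ∃ m', m = m' + 1 := ⟨m - 1, by omega⟩
        have z := mem (2 * m + 1) (by omega) (by omega)
        have a := mem (2 * (m + 1)) (by omega) (by omega)
        have b := mem (2 * m + 3) (by omega) (by omega)
        fin_cases i <;> simp only [Fin.zero_eta, Fin.mk_one, Fin.reduceFinMk]
        · exact (h.t0e m).symm ▸ W.add_mem (W.smul_mem _ z) (W.smul_mem _ a)
        · exact (h.t1e m).symm ▸ W.add_mem (W.add_mem (W.smul_mem _ z) (W.smul_mem _ a))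
            (W.smul_mem _ b)
        · exact (h.t2e (m + 1)).symm ▸ W.smul_mem _ (W.sub_mem a b)
        · exact (h.t3e (m + 1)).symm ▸ W.smul_mem _ a
      · have a := mem (2 * m + 1) (by omega) (by omega)
        have b := mem (2 * m + 2) (by omega) (by omega)
        have z : ∀ x y : F, (x * (k0 * k1 * k3 * q ^ (2 * m + 1) - k2) *
            (k0 * k1 * k3 * q ^ (2 * m + 1) - k2⁻¹)) • v (2 * m) ∈ W := by
          intro x y
          rcases (show m = l ∨ l < m by omega) with rfl | hlm
          · rw [mul_assoc, hφ, mul_zero, zero_smul]; exact W.zero_mem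
          · exact W.smul_mem _ (mem _ (by omega) (by omega))
        fin_cases i <;> simp only [Fin.zero_eta, Fin.mk_one, Fin.reduceFinMk]
        · exact (h.t0o m).symm ▸ W.smul_mem _ (W.sub_mem a b)
        · exact (h.t1o m).symm ▸ W.smul_mem _ a
        · exact (h.t2o m).symm ▸ W.add_mem (z _ 0) (W.smul_mem _ a)
        · refine (h.t3o m).symm ▸ W.add_mem (W.add_mem ?_ (W.smul_mem _ a)) (W.smul_mem _ b)
          rw [neg_smul]
          exact W.neg_mem (z _ 0)
    exact this hw
  rcases hI.2 W inv with hW0 | hW0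
  · have h1 := mem (2 * l + 1) le_rfl (by omega)
    rw [hW0, Submodule.mem_bot] at h1
    have h2 := hb ⟨2 * l + 1, by omega⟩
    simp only [h1] at h2
    exact b.ne_zero _ h2
  · have h0 : W ≤ LinearMap.ker (b.coord ⟨0, by omega⟩) := by
      rw [hW, Submodule.span_le]
      rintro _ ⟨j, ⟨h1, h2⟩, rfl⟩
      change b.repr (v j) _ = 0
      rw [repr_basis b hb h2]
      exact if_neg (by simp; omega)
    have h1 : v 0 ∈ LinearMap.ker (b.coord ⟨0, by omega⟩) := h0 (hW0 ▸ Submodule.mem_top)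
    rw [LinearMap.mem_ker, Module.Basis.coord_apply, repr_basis b hb (by omega)] at h1
    simp at h1

/-- An irreducible representation of dimension `d + 1` with `det T₃ = 1` and a common eigenvector of
`T₀` and `T₃` with eigenvalues `k₀`, `k₃` is isomorphic to `E(k₀,k₁,k₂,k₃)`. -/
lemma Good.exists_isE [FiniteDimensional F V] (hG : Good q c T) (hI : Irred T)
    (hq : q ≠ 0) (hroot : ∀ n : ℕ, 1 ≤ n → q ^ n ≠ 1) {d : ℕ} (hodd : Odd d)
    (hn : Module.finrank F V = d + 1) {k0 k1 k2 k3 : F} {v0 : V} (hv : v0 ≠ 0)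
    (h0 : T 0 v0 = k0 • v0) (h3 : T 3 v0 = k3 • v0) (hdet : LinearMap.det (T 3) = 1)
    (hk1 : k1 ≠ 0) (c1 : c 1 = k1 + k1⁻¹) (hk2 : k2 ≠ 0) (c2 : c 2 = k2 + k2⁻¹) :
    EPmem q d k0 k1 k2 k3 ∧ ∃ TE : ZMod 4 → Module.End F (Fin (d + 1) → F),
      IsE q k0 k1 k2 k3 d TE ∧ Iso TE T := by
  obtain ⟨hk0, c0⟩ := hG.eigen hv h0
  obtain ⟨hk3, c3⟩ := hG.eigen hv h3
  obtain ⟨l, hd⟩ := hodd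
  have hn' : Module.finrank F V = 2 * (l + 1) := by omega
  have hdl : d + 1 = 2 * (l + 1) := by omega
  have main : ∀ k1 : F, k1 ≠ 0 → c 1 = k1 + k1⁻¹ → k0 ^ 2 = (q ^ (2 * (l + 1)))⁻¹ ∧
      (∀ m, m < l + 1 → (k0 * k1 * k3 * q ^ (2 * m + 1) - k2) *
        (k0 * k1 * k3 * q ^ (2 * m + 1) - k2⁻¹) ≠ 0) ∧
      ∃ v, v 0 = v0 ∧ v (2 * (l + 1)) = 0 ∧ MRel q k0 k1 k2 k3 T v := by
    intro k1 hk1 c1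
    obtain ⟨v, rfl, hM⟩ := hG.exists_mrel hq hk0 hk1 hk2 hk3 c0 c1 c2 c3 h0 h3
    obtain ⟨e, hz⟩ := hM.vanish hG hI hq hroot hk0 hk1 hk2 hk3 c0 c1 c2 c3 hv hn' hdet
    exact ⟨e, fun m hm => hM.lowering_ne hI hv hn' hz hm, v, rfl, hz, hM⟩
  obtain ⟨e, φ, v, rfl, hz, hM⟩ := main k1 hk1 c1
  obtain ⟨-, φ', -⟩ := main k1⁻¹ (inv_ne_zero hk1) (by rw [c1, inv_inv, add_comm])
  rw [← hdl] at e hz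
  refine ⟨⟨hk0, hk1, hk2, hk3, e, ?_⟩, ?_⟩
  · rintro i ⟨m, rfl⟩ hi
    have f := φ m (by omega)
    have f' := φ' m (by omega)
    have f'' := φ' (l - m) (by omega)
    rw [mul_ne_zero_iff, sub_ne_zero, sub_ne_zero] at f f' f''
    have qn := pow_ne_zero (2 * m + 1) hq
    refine ⟨?_, ?_, ?_, ?_⟩
    · intro h
      apply f.2
      field_simp at h ⊢
      linear_combination h
    · intro h
      apply f'.2
      field_simp at h ⊢
      linear_combination h
    · intro h
      apply f.1
      field_simp at h
      linear_combination h
    · -- by `k₀² = q^(-d-1)` this is the condition on `k₀ k₁⁻¹ k₂⁻¹ k₃` at index `d + 1 - i`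
      intro h
      apply f''.1
      have q2 := pow_ne_zero (2 * (l - m) + 1) hq
      have e5 : q ^ (d + 1) = q ^ (2 * (l - m) + 1) * q ^ (2 * m + 1) := by
        rw [← pow_add]; congr 1; omega
      rw [e5] at e
      have e6 : k0 * k1⁻¹ * k3 = k2 * (k0 ^ 2 * (k0 * k1 * k2 * k3⁻¹)⁻¹) := by
        field_simp
      rw [e6, h, e]
      field_simp
  · obtain ⟨b, hb⟩ := hM.exists_basis (hI.gen hv) hn
    set S : (Fin (d + 1) → F) ≃ₗ[F] V := b.equivFun.symm with hS
    have hSS : ∀ i x, S ((S.symm.conj (T i)) x) = T i (S x) := by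
      intro i x; simp [LinearEquiv.conj_apply]
    refine ⟨fun i => S.symm.conj (T i), ?_, S, hSS⟩
    refine hM.isE ⟨l, hd⟩ hk0 e hz S hSS fun i hi => ?_
    rw [e_of_le (by omega), Pi.basisFun_apply, hS, Module.Basis.equivFun_symm_apply]
    simp [Pi.single_apply, hb]

/-- Schur's lemma. -/
lemma Irred.scalar [IsAlgClosed F] [FiniteDimensional F V] (hI : Irred T) (A : Module.End F V)
    (hA : ∀ j, Commute A (T j)) : ∃ a : F, ∀ v, A v = a • v := by
  obtain ⟨v, hv⟩ := hI.1
  have : Nontrivial V := ⟨v, 0, hv⟩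
  obtain ⟨a, ha⟩ := Module.End.exists_eigenvalue A
  refine ⟨a, fun v => ?_⟩
  have htop := (hI.2 (A.eigenspace a) fun j w hw => ?_).resolve_left ha
  · exact Module.End.mem_eigenspace_iff.1 (htop ▸ Submodule.mem_top)
  · rw [Module.End.mem_eigenspace_iff] at hw ⊢
    have := congrArg (fun f => f w) (hA j).eq
    simp only [Module.End.mul_apply, hw, map_smul] at this
    exact this

lemma IsRep.exists_good [IsAlgClosed F] [FiniteDimensional F V] (h : IsRep q T) (hI : Irred T) :
    ∃ c, Good q c T := by
  choose c hc using fun i => hI.scalar (T i + Ring.inverse (T i)) (h.2.1 i)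
  refine ⟨c, fun i v => ?_, fun v => ?_⟩
  · have h1 := hc i (T i v)
    have h2 := congrArg (fun f => f v) (Ring.inverse_mul_cancel (T i) (h.1 i))
    simp only [Module.End.mul_apply, Module.End.one_apply] at h2
    rw [LinearMap.add_apply, h2] at h1
    rw [← h1, add_sub_cancel_right]
  · simpa using congrArg (fun f => f v) h.2.2

lemma twist_twist (ε ε' : ZMod 4) : twist (twist T ε) ε' = twist T (ε' + ε) := by
  funext i; simp only [twist, add_assoc]

lemma twist_zero : twist T 0 = T := by
  funext i; simp only [twist, add_zero]

lemma Iso.twist {V' : Type*} [AddCommGroup V'] [Module F V'] {T' : ZMod 4 → Module.End F V'}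
    (h : Iso T T') (ε : ZMod 4) : Iso (DAHA.twist T ε) (DAHA.twist T' ε) := by
  obtain ⟨S, hS⟩ := h
  exact ⟨S, fun i => hS (i + ε)⟩

lemma Iso.symm {V' : Type*} [AddCommGroup V'] [Module F V'] {T' : ZMod 4 → Module.End F V'}
    (h : Iso T T') : Iso T' T := by
  obtain ⟨S, hS⟩ := h
  exact ⟨S.symm, fun i v => by rw [S.symm_apply_eq, hS, S.apply_symm_apply]⟩

/-- Operators satisfying the relations of `M` on a spanning sequence are determined by them. -/
lemma MRel.unique {k0 k1 k2 k3 : F} {v : ℕ → V} {T' : ZMod 4 → Module.End F V}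
    (h : MRel q k0 k1 k2 k3 T v) (h' : MRel q k0 k1 k2 k3 T' v)
    (hs : Submodule.span F (Set.range v) = ⊤) : T = T' := by
  funext j
  refine LinearMap.ext_on_range hs fun i => ?_
  obtain ⟨m, rfl | rfl⟩ := Nat.even_or_odd' i
  · fin_cases j <;> simp only [Fin.zero_eta, Fin.mk_one, Fin.reduceFinMk]
    · cases m with
      | zero => exact h.t0z.trans h'.t0z.symm
      | succ m => exact (h.t0e m).trans (h'.t0e m).symm
    · cases m with
      | zero => exact h.t1z.trans h'.t1z.symm
      | succ m => exact (h.t1e m).trans (h'.t1e m).symm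
    · exact (h.t2e m).trans (h'.t2e m).symm
    · exact (h.t3e m).trans (h'.t3e m).symm
  · fin_cases j <;> simp only [Fin.zero_eta, Fin.mk_one, Fin.reduceFinMk]
    · exact (h.t0o m).trans (h'.t0o m).symm
    · exact (h.t1o m).trans (h'.t1o m).symm
    · exact (h.t2o m).trans (h'.t2o m).symm
    · exact (h.t3o m).trans (h'.t3o m).symm

/-- The determinants of `E(k₀,k₁,k₂,k₃)`, computed from the eigenvectors `v₀` (common to `T₀` and
`T₃`) and `v_d` (common to `T₀` and `T₁`). -/
lemma IsE.det [IsAlgClosed F] {k0 k1 k2 k3 : F} {d : ℕ}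
    {T : ZMod 4 → Module.End F (Fin (d + 1) → F)} (h : IsE q k0 k1 k2 k3 d T) (hq : q ≠ 0)
    (hroot : ∀ n : ℕ, 1 ≤ n → q ^ n ≠ 1) (hodd : Odd d) (hk : EPmem q d k0 k1 k2 k3) (i : ZMod 4) :
    LinearMap.det (T i) = if i = 0 then (q ^ (d + 1))⁻¹ else 1 := by
  have hG := h.good hq hodd hk
  have hI := h.irred hq hroot hodd hk
  have hM := h.mrel hq hodd hk.1 hk.2.2.2.2.1
  obtain ⟨l, hd⟩ := id hodd
  have hn : Module.finrank F (Fin (d + 1) → F) = 2 * (l + 1) := by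
    rw [Module.finrank_fin_fun]; omega
  have hne : ∀ i, i < d + 1 → e F d i ≠ 0 := by
    intro i hi
    rw [e_of_le hi]
    exact Module.Basis.ne_zero _ _
  obtain ⟨d1, d2⟩ := hG.det_eq_one hq (hne 0 (by omega)) hM.t0z (hM.t3e 0)
    (hI.gen (hne 0 (by omega))) hn
  obtain ⟨-, -, -, t0d, -, t1o, -⟩ := h
  obtain ⟨-, d3⟩ := (hG.twist 1).det_eq_one hq (hne d (by omega)) (t1o d hodd le_rfl) t0d
    ((hI.twist 1).gen (hne d (by omega))) hn
  change LinearMap.det (T 3) = 1 at d3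
  have d0 : LinearMap.det (T 0) = (q ^ (d + 1))⁻¹ := by
    have e1 : T 0 * T 1 * T 2 * T 3 = q⁻¹ • (1 : Module.End F _) := hG.isRep.2.2
    have e2 := congrArg LinearMap.det e1
    rwa [map_mul, map_mul, map_mul, d1, d2, d3, mul_one, mul_one, mul_one, LinearMap.det_smul,
      map_one, mul_one, Module.finrank_fin_fun, inv_pow] at e2
  fin_cases i <;> simp only [Fin.zero_eta, Fin.mk_one, Fin.reduceFinMk]
  · exact d0
  · exact d1
  · exact d2
  · exact d3

end Classification

/-! ### Isomorphisms and the classification -/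

section Parameters

lemma Iso.det {V V' : Type*} [AddCommGroup V] [Module F V] [AddCommGroup V'] [Module F V']
    {T : ZMod 4 → Module.End F V} {T' : ZMod 4 → Module.End F V'} (h : Iso T T') (i : ZMod 4) :
    LinearMap.det (T i) = LinearMap.det (T' i) := by
  obtain ⟨S, hS⟩ := h
  rw [← LinearMap.det_conj (T i) S]
  congr 1
  ext v
  change S (T i (S.symm v)) = T' i v
  rw [hS, S.apply_symm_apply]

/-- The scalars `Tᵢ + Tᵢ⁻¹` are isomorphism invariants. -/
lemma Iso.char {V V' : Type*} [AddCommGroup V] [Module F V] [AddCommGroup V'] [Module F V']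
    {T : ZMod 4 → Module.End F V} {T' : ZMod 4 → Module.End F V'} (h : Iso T T') {q : F}
    {c c' : ZMod 4 → F} (hG : Good q c T) (hG' : Good q c' T') (hI : Irred T) (i : ZMod 4) :
    c i = c' i := by
  obtain ⟨S, hS⟩ := h
  obtain ⟨v, hv⟩ := hI.1
  have e1 := congrArg S (hG.quad i v)
  rw [hS, hS, hG'.quad, map_sub, map_smul, hS, sub_left_inj] at e1
  by_contra hne
  have e2 : (c' i - c i) • T' i (S v) = 0 := by rw [sub_smul, e1, sub_self]
  have e3 := (smul_eq_zero.1 e2).resolve_left (sub_ne_zero.2 (Ne.symm hne))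
  have e4 := hG'.quad i (S v)
  rw [e3, map_zero, smul_zero, zero_sub, eq_comm, neg_eq_zero] at e4
  exact hv (S.map_eq_zero_iff.1 e4)

lemma add_inv_eq_add_inv {a b : F} (ha : a ≠ 0) (hb : b ≠ 0) :
    a + a⁻¹ = b + b⁻¹ ↔ b = a ∨ b = a⁻¹ := by
  constructor
  · intro h
    refine eq_or_eq_inv ha rfl ?_
    rw [h, add_mul, inv_mul_cancel₀ hb, add_sub_cancel_right]
  · rintro (rfl | rfl)
    · rfl
    · rw [inv_inv, add_comm]

/-- Inverting any of `k₁, k₂, k₃` does not change the isomorphism class: from the common eigenvector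
`v_d` of `T₀` and `T₁`, `Good.unflip` produces a common eigenvector of `T₀` and `T₃` for either
eigenvalue of `T₃`. -/
lemma IsE.iso [IsAlgClosed F] {q : F} (hq : q ≠ 0) (hroot : ∀ n : ℕ, 1 ≤ n → q ^ n ≠ 1) {d : ℕ}
    (hodd : Odd d) {k0 k1 k2 k3 k1' k2' k3' : F} {T T' : ZMod 4 → Module.End F (Fin (d + 1) → F)}
    (hk : EPmem q d k0 k1 k2 k3) (hk' : EPmem q d k0 k1' k2' k3')
    (h : IsE q k0 k1 k2 k3 d T) (h' : IsE q k0 k1' k2' k3' d T')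
    (h1 : k1 + k1⁻¹ = k1' + k1'⁻¹) (h2 : k2 + k2⁻¹ = k2' + k2'⁻¹)
    (h3 : k3 + k3⁻¹ = k3' + k3'⁻¹) : Iso T T' := by
  have hG := h.good hq hodd hk
  have hI := h.irred hq hroot hodd hk
  have hdet := h.det hq hroot hodd hk
  obtain ⟨l, hd⟩ := id hodd
  have hw : e F d d ≠ 0 := by
    rw [e_of_le (by omega)]
    exact Module.Basis.ne_zero _ _
  obtain ⟨-, -, -, t0d, -, t1o, -⟩ := id h
  obtain ⟨v, hv, v0, v3⟩ := hG.unflip hI hq hroot hw t0d (t1o d hodd le_rfl) (m := l)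
    (by rw [Module.finrank_fin_fun]; omega) (hdet 1) hk'.2.2.2.1 h3
  obtain ⟨-, TE, hE, hiso⟩ := hG.exists_isE hI hq hroot hodd (Module.finrank_fin_fun F) hv v0 v3
    (hdet 3) hk'.2.1 h1 hk'.2.2.1 h2
  have heq : TE = T' := (hE.mrel hq hodd hk'.1 hk'.2.2.2.2.1).unique
    (h'.mrel hq hodd hk'.1 hk'.2.2.2.2.1) span_e
  exact heq ▸ hiso.symm

end Parameters

/-- classification of the even-dimensional irreducible representations of `H_q`. -/
theorem statement2 [IsAlgClosed F] (q : F) (hq : q ≠ 0)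
    (hroot : ∀ n : ℕ, 1 ≤ n → q ^ n ≠ 1)
    (d : ℕ) (hd : 1 ≤ d) (hodd : Odd d) :
    (∀ (ε : ZMod 4) (k0 k1 k2 k3 : F), EPmem q d k0 k1 k2 k3 →
      ∀ T : ZMod 4 → Module.End F (Fin (d + 1) → F), IsE q k0 k1 k2 k3 d T →
        IsRep q (twist T ε) ∧ Irred (twist T ε) ∧
        Module.finrank F (Fin (d + 1) → F) = d + 1) ∧
    (∀ (V : Type u) [AddCommGroup V] [Module F V]
        (T' : ZMod 4 → Module.End F V),
      IsRep q T' → Irred T' → Module.finrank F V = d + 1 →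
      ∃ (ε : ZMod 4) (k0 k1 k2 k3 : F), EPmem q d k0 k1 k2 k3 ∧
        ∃ T : ZMod 4 → Module.End F (Fin (d + 1) → F),
          IsE q k0 k1 k2 k3 d T ∧ Iso (twist T ε) T') ∧
    (∀ (ε ε' : ZMod 4) (k0 k1 k2 k3 k0' k1' k2' k3' : F),
      EPmem q d k0 k1 k2 k3 → EPmem q d k0' k1' k2' k3' →
      ∀ T T' : ZMod 4 → Module.End F (Fin (d + 1) → F),
        IsE q k0 k1 k2 k3 d T → IsE q k0' k1' k2' k3' d T' →
        (Iso (twist T ε) (twist T' ε') ↔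
          (ε = ε' ∧ k0' = k0 ∧ (k1' = k1 ∨ k1' = k1⁻¹) ∧
            (k2' = k2 ∨ k2' = k2⁻¹) ∧ (k3' = k3 ∨ k3' = k3⁻¹)))) := by
  refine ⟨?_, ?_, ?_⟩
  · intro ε k0 k1 k2 k3 hk T h
    exact ⟨((h.good hq hodd hk).twist ε).isRep, (h.irred hq hroot hodd hk).twist ε,
      Module.finrank_fin_fun F⟩
  · intro V _ _ T' hR hI hn
    have : FiniteDimensional F V := Module.finite_of_finrank_pos (by omega)
    obtain ⟨c, hG⟩ := hR.exists_good hI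
    obtain ⟨l, hl⟩ := id hodd
    obtain ⟨ε, ⟨v, hv, k0, k3, v0, v3⟩, hdet⟩ :=
      hG.exists_twist hI hq hroot (m := l + 1) (by omega)
    obtain ⟨k1, hk1, c1⟩ := exists_add_inv (c (1 + ε))
    obtain ⟨k2, hk2, c2⟩ := exists_add_inv (c (2 + ε))
    obtain ⟨hk, T, hE, hiso⟩ := (hG.twist ε).exists_isE (hI.twist ε) hq hroot hodd hn hv v0 v3 hdet
      hk1 c1 hk2 c2
    refine ⟨-ε, k0, k1, k2, k3, hk, T, hE, ?_⟩
    have := hiso.twist (-ε)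
    rwa [twist_twist, neg_add_cancel, twist_zero] at this
  · intro ε ε' k0 k1 k2 k3 k0' k1' k2' k3' hk hk' T T' h h'
    have chr_iff {a b : F} (ha : a ≠ 0) (hb : b ≠ 0) := add_inv_eq_add_inv ha hb
    constructor
    · intro hiso
      have hQ : (q ^ (d + 1))⁻¹ ≠ 1 := by
        rw [Ne, inv_eq_one]
        exact hroot _ (by omega)
      -- the index at which the determinant is `q^(-d-1)` recovers the twist
      have hε : ε = ε' := by
        have e1 := hiso.det (-ε)
        change LinearMap.det (T (-ε + ε)) = LinearMap.det (T' (-ε + ε')) at e1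
        rw [h.det hq hroot hodd hk, h'.det hq hroot hodd hk', neg_add_cancel, if_pos rfl] at e1
        by_contra hne
        rw [if_neg fun h0 => hne (neg_add_eq_zero.1 h0)] at e1
        exact hQ e1
      subst hε
      have hiso' := hiso.twist (-ε)
      rw [twist_twist, twist_twist, neg_add_cancel, twist_zero, twist_zero] at hiso'
      have hc := hiso'.char (h.good hq hodd hk) (h'.good hq hodd hk') (h.irred hq hroot hodd hk)
      refine ⟨rfl, ?_, (chr_iff hk.2.1 hk'.2.1).1 (hc 1), (chr_iff hk.2.2.1 hk'.2.2.1).1 (hc 2),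
        (chr_iff hk.2.2.2.1 hk'.2.2.2.1).1 (hc 3)⟩
      rcases (chr_iff hk.1 hk'.1).1 (hc 0) with h0 | h0
      · exact h0
      · -- `k₀⁻² = k₀²` would make `q` a root of unity
        exfalso
        have e1 := hk'.2.2.2.2.1
        rw [h0, inv_pow, hk.2.2.2.2.1, inv_inv, ← mul_eq_one_iff_eq_inv₀ (pow_ne_zero _ hq),
          ← pow_add] at e1
        exact hroot _ (by omega) e1
    · rintro ⟨rfl, rfl, h1, h2, h3⟩
      exact (IsE.iso hq hroot hodd hk hk' h h' ((chr_iff hk.2.1 hk'.2.1).2 h1)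
        ((chr_iff hk.2.2.1 hk'.2.2.1).2 h2) ((chr_iff hk.2.2.2.1 hk'.2.2.2.1).2 h3)).twist ε

end DAHA
end
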